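/- arXiv:2107.11528 — 2 statements merged into one kernel-verified Lean document; each statement's English description precedes it below -/
import Mathlib

section
/- (Morawetz identity) Let u, F : ℝ × ℝ³ → ℂ be smooth functions such that u(t,·) and F(t,·) are Schwartz functions for every t, with Schwartz seminorms of u(t,·), ∂ₜu(t,·) and F(t,·) bounded uniformly for t in compact intervals, and suppose i ∂ₜu(t,x) + Δu(t,x) = F(t,x) for all (t,x). Let w : ℝ³ → ℝ be smooth with all derivatives of order ≥ 1 polynomially bounded, and set M_w(t) = 2 Im ∫_{ℝ³} ∇w(x) · ∇u(t,x) conj(u(t,x)) dx. Then for every t, (d/dt) M_w(t) = ∫_{ℝ³} (−ΔΔw)(x) |u(t,x)|² dx + 4 ∫_{ℝ³} ∂_j∂_k w(x) Re( ∂_j conj(u) ∂_k u )(t,x) dx + 2 ∫_{ℝ³} ∂_j w(x) {F,u}_P^j(t,x) dx, where {f,g}_P = Re( f ∇conj(g) − g ∇conj(f) ) and repeated indices j,k ∈ {1,2,3} are summed. -/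
open MeasureTheory Real Filter
open scoped BigOperators Topology

noncomputable section

/-- Three-dimensional Euclidean space. -/
abbrev E3 : Type := EuclideanSpace ℝ (Fin 3)

/-- The `j`-th standard basis vector of `E3`. -/
def e3 (j : Fin 3) : E3 := EuclideanSpace.single j 1

/-- The `j`-th spatial partial derivative of a complex-valued function. -/
def pd (j : Fin 3) (f : E3 → ℂ) (x : E3) : ℂ := fderiv ℝ f x (e3 j)

/-- The `j`-th spatial partial derivative of a real-valued function. -/
def pdR (j : Fin 3) (w : E3 → ℝ) (x : E3) : ℝ := fderiv ℝ w x (e3 j)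

/-- The Laplacian of a complex-valued function on `E3`. -/
def lap (f : E3 → ℂ) (x : E3) : ℂ := ∑ j : Fin 3, pd j (fun y => pd j f y) x

/-- The Laplacian of a real-valued function on `E3`. -/
def lapR (w : E3 → ℝ) (x : E3) : ℝ := ∑ j : Fin 3, pdR j (fun y => pdR j w y) x

/-- Second partial derivatives `∂_j ∂_k w` of a real-valued function on `E3`. -/
def pdR2 (j k : Fin 3) (w : E3 → ℝ) (x : E3) : ℝ := pdR j (fun y => pdR k w y) x

/-- A smooth Schwartz solution of the inhomogeneous cubic NLS with inverse-square
potential: `i ∂ₜ u + Δu − (a/|x|²) u = λ |x|^{−b} |u|² u` on `ℝ × (ℝ³ \ {0})`,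
with `u(t,·)` Schwartz for each time, and Schwartz seminorms of `u(t,·)`
and `∂ₜ u(t,·)` locally uniformly bounded in `t`. -/
structure IsSchwartzSolution (a b lam : ℝ) (u : ℝ → E3 → ℂ) : Prop where
  smooth : ContDiff ℝ (⊤ : ℕ∞) (Function.uncurry u)
  schwartz : ∀ t : ℝ, ∃ f : SchwartzMap E3 ℂ, ∀ x : E3, f x = u t x
  schwartz_dt : ∀ t : ℝ, ∃ f : SchwartzMap E3 ℂ, ∀ x : E3,
      f x = deriv (fun s => u s x) t
  unif_bound : ∀ (k n : ℕ) (T : ℝ), 0 < T → ∃ C : ℝ, ∀ t ∈ Set.Icc (-T) T, ∀ x : E3,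
      ‖x‖ ^ k * ‖iteratedFDeriv ℝ n (u t) x‖
        + ‖x‖ ^ k * ‖iteratedFDeriv ℝ n (fun y => deriv (fun s => u s y) t) x‖ ≤ C
  eqn : ∀ (t : ℝ) (x : E3), x ≠ 0 →
      Complex.I * deriv (fun s => u s x) t + lap (u t) x
          - ((a / ‖x‖ ^ 2 : ℝ) : ℂ) * u t x
        = (lam : ℂ) * ((‖x‖ ^ (-b) : ℝ) : ℂ) * ((‖u t x‖ ^ 2 : ℝ) : ℂ) * u t x


namespace Morawetz

/-- Schwartz functions as a predicate. -/
def S (f : E3 → ℂ) : Prop := ∃ φ : SchwartzMap E3 ℂ, (φ : E3 → ℂ) = f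

theorem S.contDiff {f : E3 → ℂ} (hf : S f) : ContDiff ℝ (⊤ : ℕ∞) f := by
  obtain ⟨φ, rfl⟩ := hf
  exact φ.smooth _

theorem S.diff {f : E3 → ℂ} (hf : S f) : Differentiable ℝ f := by
  obtain ⟨φ, rfl⟩ := hf
  exact φ.differentiable

theorem S.integrable {f : E3 → ℂ} (hf : S f) : Integrable f := by
  obtain ⟨φ, rfl⟩ := hf
  exact φ.integrable

theorem S.temp {f : E3 → ℂ} (hf : S f) : f.HasTemperateGrowth := by
  obtain ⟨φ, rfl⟩ := hf
  exact φ.hasTemperateGrowth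

theorem S.add {f g : E3 → ℂ} (hf : S f) (hg : S g) : S (fun x => f x + g x) := by
  obtain ⟨φ, rfl⟩ := hf
  obtain ⟨ψ, rfl⟩ := hg
  exact ⟨φ + ψ, rfl⟩

theorem S.sub {f g : E3 → ℂ} (hf : S f) (hg : S g) : S (fun x => f x - g x) := by
  obtain ⟨φ, rfl⟩ := hf
  obtain ⟨ψ, rfl⟩ := hg
  exact ⟨φ - ψ, rfl⟩

theorem S.sum {f : Fin 3 → E3 → ℂ} (hf : ∀ j, S (f j)) : S (fun x => ∑ j, f j x) := by
  simp only [Fin.sum_univ_three]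
  exact ((hf 0).add (hf 1)).add (hf 2)

theorem S.tmul {f g : E3 → ℂ} (hf : f.HasTemperateGrowth) (hg : S g) :
    S (fun x => f x * g x) := by
  obtain ⟨ψ, rfl⟩ := hg
  exact ⟨SchwartzMap.smulLeftCLM ℂ f ψ, by
    ext x; rw [SchwartzMap.smulLeftCLM_apply_apply hf]; rfl⟩

theorem S.mul {f g : E3 → ℂ} (hf : S f) (hg : S g) : S (fun x => f x * g x) :=
  S.tmul hf.temp hg

theorem S.cmul (c : ℂ) {g : E3 → ℂ} (hg : S g) : S (fun x => c * g x) :=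
  S.tmul (Function.HasTemperateGrowth.const c) hg

theorem S.conj {f : E3 → ℂ} (hf : S f) : S (fun x => (starRingEnd ℂ) (f x)) := by
  obtain ⟨φ, rfl⟩ := hf
  exact ⟨SchwartzMap.postcompCLM (𝕜 := ℝ) (Complex.conjCLE : ℂ →L[ℝ] ℂ) φ, by
    ext x; simp⟩

theorem S.pd {f : E3 → ℂ} (hf : S f) (j : Fin 3) : S (pd j f) := by
  obtain ⟨φ, rfl⟩ := hf
  exact ⟨SchwartzMap.evalCLM ℝ E3 ℂ (e3 j) (SchwartzMap.fderivCLM ℝ E3 ℂ φ), by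
    ext x; rfl⟩

theorem integral_pd {f : E3 → ℂ} (hf : S f) (j : Fin 3) : ∫ x, pd j f x = 0 := by
  have := integral_smul_fderiv_eq_neg_fderiv_smul_of_integrable (𝕜 := ℝ) (μ := (volume : Measure E3))
    (f := fun _ : E3 => (1 : ℝ)) (g := f) (v := e3 j)
    (by simp) (by simpa using! (hf.pd j).integrable) (by simpa using hf.integrable)
    (by simp) (fun x _ => hf.diff x)
  simpa using! this

theorem pd_mul {f g : E3 → ℂ} (hf : Differentiable ℝ f) (hg : Differentiable ℝ g) (j : Fin 3)
    (x : E3) : pd j (fun y => f y * g y) x = pd j f x * g x + f x * pd j g x := by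
  unfold pd
  rw [fderiv_fun_mul (hf x) (hg x)]
  simp; ring

theorem pd_cmul (c : ℂ) {g : E3 → ℂ} (hg : Differentiable ℝ g) (j : Fin 3)
    (x : E3) : pd j (fun y => c * g y) x = c * pd j g x := by
  unfold pd
  rw [fderiv_const_mul (hg x)]
  simp

theorem pd_sub {f g : E3 → ℂ} (hf : Differentiable ℝ f) (hg : Differentiable ℝ g) (j : Fin 3)
    (x : E3) : pd j (fun y => f y - g y) x = pd j f x - pd j g x := by
  unfold pd
  rw [fderiv_fun_sub (hf x) (hg x)]
  simp

theorem pd_sum {f : Fin 3 → E3 → ℂ} (hf : ∀ k, Differentiable ℝ (f k)) (j : Fin 3)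
    (x : E3) : pd j (fun y => ∑ k, f k y) x = ∑ k, pd j (f k) x := by
  unfold pd
  rw [fderiv_fun_sum (fun k _ => hf k x)]
  simp

theorem pd_conj {f : E3 → ℂ} (hf : Differentiable ℝ f) (j : Fin 3) (x : E3) :
    pd j (fun y => (starRingEnd ℂ) (f y)) x = (starRingEnd ℂ) (pd j f x) := by
  unfold pd
  have := ((Complex.conjCLE : ℂ →L[ℝ] ℂ).hasFDerivAt.comp x (hf x).hasFDerivAt).fderiv
  have h2 : fderiv ℝ (fun y => (starRingEnd ℂ) (f y)) x = _ := this
  rw [h2]; simp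

theorem pd_ofReal {f : E3 → ℝ} (hf : Differentiable ℝ f) (j : Fin 3) (x : E3) :
    pd j (fun y => (f y : ℂ)) x = ((pdR j f x : ℝ) : ℂ) := by
  unfold pd pdR
  have := ((Complex.ofRealCLM : ℝ →L[ℝ] ℂ).hasFDerivAt.comp x (hf x).hasFDerivAt).fderiv
  have h2 : fderiv ℝ (fun y => (f y : ℂ)) x = _ := this
  rw [h2]; simp

theorem fderiv_comm {E G : Type*} [NormedAddCommGroup E] [NormedSpace ℝ E]
    [NormedAddCommGroup G] [NormedSpace ℝ G] {f : E → G}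
    (hf : ContDiff ℝ (⊤ : ℕ∞) f) (a b : E) (x : E) :
    fderiv ℝ (fun y => fderiv ℝ f y a) x b = fderiv ℝ (fun y => fderiv ℝ f y b) x a := by
  have hd : DifferentiableAt ℝ (fderiv ℝ f) x :=
    ((hf.fderiv_right (m := (⊤ : ℕ∞)) (by simp)).differentiable (by simp)) x
  have hs : IsSymmSndFDerivAt ℝ f x :=
    hf.contDiffAt.isSymmSndFDerivAt (by simp; exact WithTop.coe_le_coe.2 (le_top : (2 : ℕ∞) ≤ ⊤))
  rw [fderiv_clm_apply hd (differentiableAt_const _), fderiv_clm_apply hd (differentiableAt_const _)]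
  simpa using hs b a

theorem pd_comm {f : E3 → ℂ} (hf : ContDiff ℝ (⊤ : ℕ∞) f) (j k : Fin 3) :
    pd j (pd k f) = pd k (pd j f) := by
  ext x; exact fderiv_comm hf _ _ x

theorem pdR_comm {f : E3 → ℝ} (hf : ContDiff ℝ (⊤ : ℕ∞) f) (j k : Fin 3) :
    pdR j (pdR k f) = pdR k (pdR j f) := by
  ext x; exact fderiv_comm hf _ _ x

theorem pdR_contDiff {f : E3 → ℝ} (hf : ContDiff ℝ (⊤ : ℕ∞) f) (j : Fin 3) :
    ContDiff ℝ (⊤ : ℕ∞) (pdR j f) := by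
  unfold pdR
  exact (hf.fderiv_right (m := (⊤ : ℕ∞)) (by simp)).clm_apply contDiff_const

theorem temp_pdR {f : E3 → ℝ} (hf : ContDiff ℝ (⊤ : ℕ∞) f)
    (hpoly : ∀ n : ℕ, 1 ≤ n → ∃ C : ℝ, ∃ m : ℕ, ∀ x : E3,
        ‖iteratedFDeriv ℝ n f x‖ ≤ C * (1 + ‖x‖) ^ m) (j : Fin 3) :
    (pdR j f).HasTemperateGrowth := by
  have h : (fderiv ℝ f).HasTemperateGrowth := by
    refine ⟨hf.fderiv_right (m := (⊤ : ℕ∞)) (by simp), fun n => ?_⟩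
    obtain ⟨C, m, h⟩ := hpoly (n + 1) (by omega)
    exact ⟨m, C, fun x => by rw [norm_iteratedFDeriv_fderiv]; exact h x⟩
  exact ((ContinuousLinearMap.apply ℝ ℝ (e3 j)).hasTemperateGrowth).comp h

theorem temp_pdR' {f : E3 → ℝ} (hf : f.HasTemperateGrowth) (j : Fin 3) :
    (pdR j f).HasTemperateGrowth := by
  refine temp_pdR hf.1 (fun n _ => ?_) j
  obtain ⟨m, C, h⟩ := hf.2 n
  exact ⟨C, m, h⟩

theorem temp_ofReal {f : E3 → ℝ} (hf : f.HasTemperateGrowth) :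
    (fun x => (f x : ℂ)).HasTemperateGrowth :=
  Complex.ofRealCLM.hasTemperateGrowth.comp hf

theorem lapR_lapR {w : E3 → ℝ} (hw : ContDiff ℝ (⊤ : ℕ∞) w) (x : E3) :
    lapR (lapR w) x = ∑ j, ∑ k, pdR j (pdR k (pdR k (pdR j w))) x := by
  have key : ∀ {f : Fin 3 → E3 → ℝ}, (∀ k, ContDiff ℝ (⊤ : ℕ∞) (f k)) → ∀ j,
      pdR j (fun y => ∑ k, f k y) = fun x => ∑ k, pdR j (f k) x := by
    intro f hf j
    ext x
    unfold pdR
    rw [fderiv_fun_sum (fun k _ => ((hf k).differentiable (by simp)) x)]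
    simp
  have c : ∀ (j : Fin 3) {f : E3 → ℝ}, ContDiff ℝ (⊤ : ℕ∞) f → ContDiff ℝ (⊤ : ℕ∞) (pdR j f) :=
    fun j f hf => pdR_contDiff hf j
  unfold lapR
  refine Finset.sum_congr rfl fun j _ => ?_
  change pdR j (pdR j (fun y => ∑ k, pdR k (pdR k w) y)) x = _
  rw [key (fun k => c k (c k hw)), key (fun k => c j (c k (c k hw)))]
  refine Finset.sum_congr rfl fun k _ => ?_
  rw [pdR_comm (c k hw) j k, pdR_comm hw j k]

/-- first flux -/
def fluxA (w : E3 → ℝ) (u : E3 → ℂ) (j k : Fin 3) (x : E3) : ℂ :=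
  2 * ((pdR j w x : ℂ) * (pd k (pd j u) x * (starRingEnd ℂ) (u x)
    - pd j u x * (starRingEnd ℂ) (pd k u x)))
    - 2 * ((pdR k (pdR j w) x : ℂ) * (pd j u x * (starRingEnd ℂ) (u x)))

/-- second flux -/
def fluxB (w : E3 → ℝ) (u : E3 → ℂ) (j k : Fin 3) (x : E3) : ℂ :=
  (pdR k (pdR k (pdR j w)) x : ℂ) * (u x * (starRingEnd ℂ) (u x))

section static
variable {w : E3 → ℝ} {u : E3 → ℂ}

theorem S_fluxA (hw : ∀ j, (pdR j w).HasTemperateGrowth) (hu : S u) (j k : Fin 3) :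
    S (fluxA w u j k) :=
  ((S.tmul (temp_ofReal (hw j)) ((((hu.pd j).pd k).mul hu.conj).sub
    ((hu.pd j).mul (hu.pd k).conj))).cmul 2).sub
    ((S.tmul (temp_ofReal (temp_pdR' (hw j) k)) ((hu.pd j).mul hu.conj)).cmul 2)

theorem S_fluxB (hw : ∀ j, (pdR j w).HasTemperateGrowth) (hu : S u) (j k : Fin 3) :
    S (fluxB w u j k) :=
  S.tmul (temp_ofReal (temp_pdR' (temp_pdR' (hw j) k) k)) (hu.mul hu.conj)

theorem pd_tmul {f : E3 → ℝ} {g : E3 → ℂ} (hf : f.HasTemperateGrowth) (hg : S g) (j : Fin 3)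
    (x : E3) : pd j (fun y => (f y : ℂ) * g y) x
      = (pdR j f x : ℂ) * g x + (f x : ℂ) * pd j g x := by
  have hfd : Differentiable ℝ f := hf.1.differentiable (by simp)
  rw [pd_mul ((temp_ofReal hf).1.differentiable (by simp)) hg.diff, pd_ofReal hfd]

theorem pd_fluxA (hw : ∀ j, (pdR j w).HasTemperateGrowth) (hu : S u) (j k : Fin 3) (x : E3) :
    pd k (fluxA w u j k) x =
      2 * ((pdR k (pdR j w) x : ℂ) * (pd k (pd j u) x * (starRingEnd ℂ) (u x)
          - pd j u x * (starRingEnd ℂ) (pd k u x))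
        + (pdR j w x : ℂ) * (pd j (pd k (pd k u)) x * (starRingEnd ℂ) (u x)
            + pd k (pd j u) x * (starRingEnd ℂ) (pd k u x)
          - (pd k (pd j u) x * (starRingEnd ℂ) (pd k u x)
            + pd j u x * (starRingEnd ℂ) (pd k (pd k u) x))))
      - 2 * ((pdR k (pdR k (pdR j w)) x : ℂ) * (pd j u x * (starRingEnd ℂ) (u x))
        + (pdR k (pdR j w) x : ℂ) * (pd k (pd j u) x * (starRingEnd ℂ) (u x)
          + pd j u x * (starRingEnd ℂ) (pd k u x))) := by
  have h1 := ((hu.pd j).pd k).mul hu.conj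
  have h2 := (hu.pd j).mul (hu.pd k).conj
  have h3 := (hu.pd j).mul hu.conj
  have e : pd j (pd k (pd k u)) = pd k (pd k (pd j u)) := by
    rw [pd_comm (hu.pd k).contDiff j k, pd_comm hu.contDiff j k]
  have t1 := temp_ofReal (hw j)
  have t2 := temp_ofReal (temp_pdR' (hw j) k)
  unfold fluxA
  rw [pd_sub ((S.tmul t1 (h1.sub h2)).cmul 2).diff ((S.tmul t2 h3).cmul 2).diff,
    pd_cmul _ (S.tmul t1 (h1.sub h2)).diff, pd_cmul _ (S.tmul t2 h3).diff,
    pd_tmul (hw j) (h1.sub h2), pd_tmul (temp_pdR' (hw j) k) h3, pd_sub h1.diff h2.diff,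
    pd_mul ((hu.pd j).pd k).diff hu.conj.diff, pd_mul (hu.pd j).diff (hu.pd k).conj.diff,
    pd_mul (hu.pd j).diff hu.conj.diff, pd_conj hu.diff, pd_conj (hu.pd k).diff, e]

theorem pd_fluxB (hw : ∀ j, (pdR j w).HasTemperateGrowth) (hu : S u) (j k : Fin 3) (x : E3) :
    pd j (fluxB w u j k) x =
      (pdR j (pdR k (pdR k (pdR j w))) x : ℂ) * (u x * (starRingEnd ℂ) (u x))
       + (pdR k (pdR k (pdR j w)) x : ℂ) * (pd j u x * (starRingEnd ℂ) (u x)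
          + u x * (starRingEnd ℂ) (pd j u x)) := by
  unfold fluxB
  rw [pd_tmul (temp_pdR' (temp_pdR' (hw j) k) k) (hu.mul hu.conj),
    pd_mul hu.diff hu.conj.diff, pd_conj hu.diff]

theorem pointwise (hw : ∀ j, (pdR j w).HasTemperateGrowth) (hu : S u) (j k : Fin 3) (x : E3) :
    2 * ((pdR j w x : ℂ) * (pd j (pd k (pd k u)) x * (starRingEnd ℂ) (u x)
      - pd j u x * (starRingEnd ℂ) (pd k (pd k u) x))).re
    = (pd k (fluxA w u j k) x + pd j (fluxB w u j k) x).re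
      - pdR j (pdR k (pdR k (pdR j w))) x * ‖u x‖ ^ 2
      + 4 * (pdR k (pdR j w) x * ((starRingEnd ℂ) (pd j u x) * pd k u x).re) := by
  rw [pd_fluxA hw hu, pd_fluxB hw hu, Complex.sq_norm, Complex.normSq_apply]
  simp only [Complex.add_re, Complex.sub_re, Complex.mul_re, Complex.mul_im, Complex.add_im,
    Complex.sub_im, Complex.ofReal_re, Complex.ofReal_im, Complex.conj_re, Complex.conj_im,
    Complex.re_ofNat, Complex.im_ofNat]
  ring

theorem S_re_integrable {g : E3 → ℂ} (hg : S g) : Integrable (fun x => (g x).re) :=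
  hg.integrable.re

theorem combine {g r1 r2 r3 d : E3 → ℝ} (i1 : Integrable r1) (i2 : Integrable r2)
    (i3 : Integrable r3) (id : Integrable d) (hd : ∫ x, d x = 0)
    (h : ∀ x, 2 * g x = r1 x + 4 * r2 x + 2 * r3 x + d x) :
    2 * ∫ x, g x = (∫ x, r1 x) + 4 * (∫ x, r2 x) + 2 * ∫ x, r3 x := by
  have j2 := i2.const_mul 4
  have j3 := i3.const_mul 2
  have j12 : Integrable (fun x => r1 x + 4 * r2 x) := i1.add j2
  have j123 : Integrable (fun x => r1 x + 4 * r2 x + 2 * r3 x) := j12.add j3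
  rw [← integral_const_mul]
  simp only [h]
  rw [integral_add j123 id, integral_add j12 j3, integral_add i1 j2, hd, add_zero,
    integral_const_mul, integral_const_mul]

theorem static_identity (hws : ContDiff ℝ (⊤ : ℕ∞) w)
    (hw : ∀ j, (pdR j w).HasTemperateGrowth) (hu : S u)
    {F v : E3 → ℂ} (hF : S F) (hv : S v) (heq : ∀ x, Complex.I * v x + lap u x = F x) :
    2 * (∫ x, ∑ j, (pdR j w x : ℂ) * (pd j v x * (starRingEnd ℂ) (u x)
        + pd j u x * (starRingEnd ℂ) (v x))).im =
      ((∫ x : E3, (-(lapR (lapR w) x)) * ‖u x‖ ^ 2)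
        + 4 * (∫ x : E3, ∑ j : Fin 3, ∑ k : Fin 3,
            pdR2 j k w x * ((starRingEnd ℂ) (pd j u x) * pd k u x).re)
        + 2 * ∫ x : E3, ∑ j : Fin 3,
            pdR j w x * (F x * (starRingEnd ℂ) (pd j u x)
              - u x * (starRingEnd ℂ) (pd j F x)).re) := by
  have hveq : v = fun x => Complex.I * lap u x - Complex.I * F x := by
    ext x
    rw [← heq x]
    linear_combination (v x) * Complex.I_mul_I
  have hlap : S (lap u) := S.sum (f := fun k => pd k (pd k u)) fun k => (hu.pd k).pd k
  have hpdv : ∀ j x, pd j v x = Complex.I * (∑ k, pd j (pd k (pd k u)) x)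
      - Complex.I * pd j F x := by
    intro j x
    rw [hveq, pd_sub (hlap.cmul _).diff (hF.cmul _).diff, pd_cmul _ hlap.diff, pd_cmul _ hF.diff]
    congr 2
    exact pd_sum (f := fun k => pd k (pd k u)) (fun k => ((hu.pd k).pd k).diff) j x
  have hG : S (fun x => ∑ j, (pdR j w x : ℂ) * (pd j v x * (starRingEnd ℂ) (u x)
        + pd j u x * (starRingEnd ℂ) (v x))) :=
    S.sum fun j => S.tmul (temp_ofReal (hw j)) (((hv.pd j).mul hu.conj).add
      ((hu.pd j).mul hv.conj))
  have hD : S (fun x => ∑ j, ∑ k, (pd k (fluxA w u j k) x + pd j (fluxB w u j k) x)) :=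
    S.sum fun j => S.sum fun k => ((S_fluxA hw hu j k).pd k).add ((S_fluxB hw hu j k).pd j)
  have hD0 : ∫ x, ∑ j, ∑ k, (pd k (fluxA w u j k) x + pd j (fluxB w u j k) x) = 0 := by
    have hi : ∀ j k, Integrable
        (fun x => pd k (fluxA w u j k) x + pd j (fluxB w u j k) x) := fun j k =>
      (((S_fluxA hw hu j k).pd k).add ((S_fluxB hw hu j k).pd j)).integrable
    rw [integral_finsetSum _ (fun j _ => integrable_finsetSum _ (fun k _ => hi j k))]
    refine Finset.sum_eq_zero fun j _ => ?_
    rw [integral_finsetSum _ (fun k _ => hi j k)]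
    refine Finset.sum_eq_zero fun k _ => ?_
    rw [integral_add ((S_fluxA hw hu j k).pd k).integrable ((S_fluxB hw hu j k).pd j).integrable,
      integral_pd (S_fluxA hw hu j k), integral_pd (S_fluxB hw hu j k), add_zero]
  have i1 : Integrable (fun x : E3 => (-(lapR (lapR w) x)) * ‖u x‖ ^ 2) := by
    have : S (fun x => ∑ j, ∑ k, (-1) * ((pdR j (pdR k (pdR k (pdR j w))) x : ℂ) *
        (u x * (starRingEnd ℂ) (u x)))) :=
      S.sum fun j => S.sum fun k => (S.tmul (temp_ofReal
        (temp_pdR' (temp_pdR' (temp_pdR' (hw j) k) k) j)) (hu.mul hu.conj)).cmul _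
    refine (S_re_integrable this).congr (ae_of_all _ fun x => ?_)
    simp only [lapR_lapR hws, Fin.sum_univ_three, Complex.mul_conj, Complex.sq_norm]
    simp
    ring
  have i2 : Integrable (fun x : E3 => ∑ j : Fin 3, ∑ k : Fin 3,
            pdR2 j k w x * ((starRingEnd ℂ) (pd j u x) * pd k u x).re) := by
    have : S (fun x => ∑ j, ∑ k, ((pdR j (pdR k w) x : ℂ) *
        ((starRingEnd ℂ) (pd j u x) * pd k u x))) :=
      S.sum fun j => S.sum fun k => (S.tmul (temp_ofReal
        (temp_pdR' (hw k) j)) ((hu.pd j).conj.mul (hu.pd k)))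
    refine (S_re_integrable this).congr (ae_of_all _ fun x => ?_)
    simp only [Complex.re_sum, Complex.re_ofReal_mul]
    rfl
  have i3 : Integrable (fun x : E3 => ∑ j : Fin 3,
            pdR j w x * (F x * (starRingEnd ℂ) (pd j u x)
              - u x * (starRingEnd ℂ) (pd j F x)).re) := by
    have : S (fun x => ∑ j, ((pdR j w x : ℂ) *
        (F x * (starRingEnd ℂ) (pd j u x) - u x * (starRingEnd ℂ) (pd j F x)))) :=
      S.sum fun j => (S.tmul (temp_ofReal (hw j))
        ((hF.mul (hu.pd j).conj).sub (hu.mul (hF.pd j).conj)))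
    refine (S_re_integrable this).congr (ae_of_all _ fun x => ?_)
    simp only [Complex.re_sum, Complex.re_ofReal_mul]
  have eG : (∫ x, ∑ j, (pdR j w x : ℂ) * (pd j v x * (starRingEnd ℂ) (u x)
        + pd j u x * (starRingEnd ℂ) (v x))).im = _ :=
    (Complex.imCLM.integral_comp_comm hG.integrable).symm
  have eD : (∫ x, ∑ j, ∑ k, (pd k (fluxA w u j k) x + pd j (fluxB w u j k) x)).re = _ :=
    (Complex.reCLM.integral_comp_comm hD.integrable).symm
  rw [hD0, Complex.zero_re] at eD
  have iD := hD.integrable.re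
  rw [eG]
  refine combine i1 i2 i3 iD eD.symm fun x => ?_
  have hp := fun j k => pointwise hw hu j k x
  have hvx : v x = Complex.I * (∑ k, pd k (pd k u) x) - Complex.I * F x := by
    rw [hveq]; rfl
  have hswap : (∑ j : Fin 3, ∑ k : Fin 3,
      pdR2 j k w x * ((starRingEnd ℂ) (pd j u x) * pd k u x).re)
      = ∑ j : Fin 3, ∑ k : Fin 3,
      pdR k (pdR j w) x * ((starRingEnd ℂ) (pd j u x) * pd k u x).re := by
    refine Finset.sum_congr rfl fun j _ => Finset.sum_congr rfl fun k _ => ?_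
    rw [pdR_comm hws k j]; rfl
  have e1 : 2 * (∑ j, (pdR j w x : ℂ) * (pd j v x * (starRingEnd ℂ) (u x)
        + pd j u x * (starRingEnd ℂ) (v x))).im
      = (∑ j, ∑ k, 2 * ((pdR j w x : ℂ) * (pd j (pd k (pd k u)) x * (starRingEnd ℂ) (u x)
      - pd j u x * (starRingEnd ℂ) (pd k (pd k u) x))).re)
      + 2 * ∑ j : Fin 3, pdR j w x * (F x * (starRingEnd ℂ) (pd j u x)
              - u x * (starRingEnd ℂ) (pd j F x)).re := by
    rw [Complex.im_sum, Finset.mul_sum, Finset.mul_sum, ← Finset.sum_add_distrib]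
    refine Finset.sum_congr rfl fun j _ => ?_
    rw [hvx, hpdv]
    simp only [Fin.sum_univ_three, map_sub, map_add, map_mul, Complex.conj_I]
    simp only [Complex.add_re, Complex.sub_re, Complex.mul_re, Complex.mul_im, Complex.add_im,
      Complex.sub_im, Complex.ofReal_re, Complex.ofReal_im, Complex.conj_re, Complex.conj_im,
      Complex.I_re, Complex.I_im, Complex.neg_re, Complex.neg_im]
    ring
  change 2 * (∑ j, (pdR j w x : ℂ) * (pd j v x * (starRingEnd ℂ) (u x)
        + pd j u x * (starRingEnd ℂ) (v x))).im = -lapR (lapR w) x * ‖u x‖ ^ 2 + 4 * _ + 2 * _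
        + (∑ j, ∑ k, (pd k (fluxA w u j k) x + pd j (fluxB w u j k) x)).re
  rw [e1, hswap, lapR_lapR hws]
  simp only [hp, Complex.re_sum]
  simp only [Finset.sum_add_distrib, Finset.sum_sub_distrib,
    ← Finset.sum_mul, ← Finset.mul_sum]
  ring

end static

section time

theorem slice_t {V : ℝ × E3 → ℂ} (hV : Differentiable ℝ V) (s : ℝ) (x : E3) :
    HasDerivAt (fun r => V (r, x)) (fderiv ℝ V (s, x) (1, 0)) s := by
  have h1 : HasDerivAt (fun r : ℝ => (r, x)) ((1 : ℝ), (0 : E3)) s :=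
    (hasDerivAt_id s).prodMk (hasDerivAt_const s x)
  exact (hV (s, x)).hasFDerivAt.comp_hasDerivAt s h1

theorem slice_x {V : ℝ × E3 → ℂ} (hV : Differentiable ℝ V) (s : ℝ) (x : E3) (j : Fin 3) :
    pd j (fun y => V (s, y)) x = fderiv ℝ V (s, x) (0, e3 j) := by
  have h1 : HasFDerivAt (fun y : E3 => (s, y)) (ContinuousLinearMap.inr ℝ ℝ E3) x :=
    hasFDerivAt_prodMk_right s x
  have h2 := ((hV (s, x)).hasFDerivAt.comp x h1).fderiv
  have h3 : fderiv ℝ (fun y => V (s, y)) x = _ := h2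
  unfold pd
  rw [h3]
  simp

theorem hasDerivAt_pd {u : ℝ → E3 → ℂ} (hu : ContDiff ℝ (⊤ : ℕ∞) (Function.uncurry u))
    (j : Fin 3) (s : ℝ) (x : E3) :
    HasDerivAt (fun r => pd j (u r) x) (pd j (fun y => deriv (fun r => u r y) s) x) s := by
  have hd : Differentiable ℝ (Function.uncurry u) := hu.differentiable (by simp)
  have hd2 : ∀ a : ℝ × E3, Differentiable ℝ (fun p => fderiv ℝ (Function.uncurry u) p a) :=
    fun a => ((hu.fderiv_right (m := (⊤ : ℕ∞)) (by simp)).clm_apply contDiff_const).differentiable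
      (by simp)
  have e1 : (fun r => pd j (u r) x) =
      fun r => fderiv ℝ (Function.uncurry u) (r, x) (0, e3 j) := by
    ext r; exact slice_x hd r x j
  have e2 : (fun y => deriv (fun r => u r y) s) =
      fun y => fderiv ℝ (Function.uncurry u) (s, y) (1, 0) := by
    ext y; exact (slice_t hd s y).deriv
  rw [e1, e2, slice_x (hd2 (1, 0)) s x j, fderiv_comm hu]
  exact slice_t (hd2 (0, e3 j)) s x

theorem norm_pd_le (j : Fin 3) (f : E3 → ℂ) (x : E3) :
    ‖pd j f x‖ ≤ ‖iteratedFDeriv ℝ 1 f x‖ := by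
  rw [norm_iteratedFDeriv_one]
  have := (fderiv ℝ f x).le_opNorm (e3 j)
  simpa [e3, pd] using! this

theorem weight_bound {r a A B : ℝ} (hr : 0 ≤ r) (ha : 0 ≤ a) (N : ℕ) (h0 : r ^ 0 * a ≤ A)
    (hN : r ^ N * a ≤ B) : (1 + r) ^ N * a ≤ 2 ^ (N - 1) * (A + B) := by
  have h := add_pow_le zero_le_one hr N
  calc (1 + r) ^ N * a ≤ (2 ^ (N - 1) * (1 ^ N + r ^ N)) * a := by gcongr
    _ = 2 ^ (N - 1) * (r ^ 0 * a + r ^ N * a) := by simp; ring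
    _ ≤ _ := by gcongr

theorem decay {u v : ℝ → E3 → ℂ} {F : ℝ → E3 → ℂ}
    (hbound : ∀ (k n : ℕ) (T : ℝ), 0 < T → ∃ C : ℝ, ∀ t ∈ Set.Icc (-T) T, ∀ x : E3,
        ‖x‖ ^ k * ‖iteratedFDeriv ℝ n (u t) x‖
          + ‖x‖ ^ k * ‖iteratedFDeriv ℝ n (v t) x‖
          + ‖x‖ ^ k * ‖iteratedFDeriv ℝ n (F t) x‖ ≤ C) (N n : ℕ) (T : ℝ) (hT : 0 < T) :
    ∃ C : ℝ, ∀ t ∈ Set.Icc (-T) T, ∀ x : E3,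
      (1 + ‖x‖) ^ N * ‖iteratedFDeriv ℝ n (u t) x‖ ≤ C ∧
      (1 + ‖x‖) ^ N * ‖iteratedFDeriv ℝ n (v t) x‖ ≤ C := by
  obtain ⟨A, hA⟩ := hbound 0 n T hT
  obtain ⟨B, hB⟩ := hbound N n T hT
  refine ⟨2 ^ (N - 1) * (A + B), fun t ht x => ?_⟩
  have a := hA t ht x
  have b := hB t ht x
  have p : ∀ (k : ℕ) (f : E3 → ℂ), 0 ≤ ‖x‖ ^ k * ‖iteratedFDeriv ℝ n f x‖ :=
    fun k f => by positivity
  have := p 0 (u t); have := p 0 (v t); have := p 0 (F t)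
  have := p N (u t); have := p N (v t); have := p N (F t)
  exact ⟨weight_bound (norm_nonneg _) (norm_nonneg _) N (by linarith) (by linarith),
    weight_bound (norm_nonneg _) (norm_nonneg _) N (by linarith) (by linarith)⟩

theorem integrable_weight (K : ℝ) : Integrable (fun x : E3 => K * ((1 + ‖x‖) ^ 4)⁻¹) := by
  have h := integrable_one_add_norm (E := E3) (μ := volume) (r := 4) (by simp; norm_num)
  refine (h.const_mul K).congr (ae_of_all _ fun x => ?_)
  have : (0 : ℝ) ≤ 1 + ‖x‖ := by positivity
  simp only [Real.rpow_neg this]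
  norm_cast

theorem term_bound {u v : ℝ → E3 → ℂ} {F : ℝ → E3 → ℂ}
    (hbound : ∀ (k n : ℕ) (T : ℝ), 0 < T → ∃ C : ℝ, ∀ t ∈ Set.Icc (-T) T, ∀ x : E3,
        ‖x‖ ^ k * ‖iteratedFDeriv ℝ n (u t) x‖
          + ‖x‖ ^ k * ‖iteratedFDeriv ℝ n (v t) x‖
          + ‖x‖ ^ k * ‖iteratedFDeriv ℝ n (F t) x‖ ≤ C) (T : ℝ) (hT : 0 < T)
    {f : E3 → ℝ} (hf : f.HasTemperateGrowth) (j : Fin 3) :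
    ∃ K : ℝ, ∀ t ∈ Set.Icc (-T) T, ∀ x : E3,
      ‖(f x : ℂ) * (pd j (v t) x * (starRingEnd ℂ) (u t x)
        + pd j (u t) x * (starRingEnd ℂ) (v t x))‖ ≤ K * ((1 + ‖x‖) ^ 4)⁻¹ := by
  obtain ⟨m, C, hC⟩ := hf.2 0
  obtain ⟨A, hA⟩ := decay hbound (m + 4) 0 T hT
  obtain ⟨B, hB⟩ := decay hbound 0 1 T hT
  refine ⟨C * (B * A + B * A), fun t ht x => ?_⟩
  have c := hC x
  obtain ⟨a1, a2⟩ := hA t ht x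
  obtain ⟨b1, b2⟩ := hB t ht x
  rw [norm_iteratedFDeriv_zero] at c a1 a2
  rw [pow_zero, one_mul] at b1 b2
  have d1 := (norm_pd_le j (u t) x).trans b1
  have d2 := (norm_pd_le j (v t) x).trans b2
  have hr : (0 : ℝ) < 1 + ‖x‖ := by positivity
  have hB0 : 0 ≤ B := (norm_nonneg _).trans d1
  have hA0 : 0 ≤ A := le_trans (by positivity) a1
  have hC0 : 0 ≤ C * (1 + ‖x‖) ^ m := (norm_nonneg _).trans c
  have key : ‖(f x : ℂ) * (pd j (v t) x * (starRingEnd ℂ) (u t x)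
        + pd j (u t) x * (starRingEnd ℂ) (v t x))‖ ≤
      (C * (1 + ‖x‖) ^ m) * (B * ‖u t x‖ + B * ‖v t x‖) := by
    rw [norm_mul, Complex.norm_real]
    refine mul_le_mul c ((norm_add_le _ _).trans ?_) (norm_nonneg _) hC0
    rw [norm_mul, norm_mul, RCLike.norm_conj, RCLike.norm_conj]
    gcongr
  refine key.trans ?_
  rw [← div_eq_mul_inv, le_div_iff₀ (by positivity)]
  have hC1 : 0 ≤ C := by
    by_contra hn
    push Not at hn
    have : C * (1 + ‖x‖) ^ m < 0 := mul_neg_of_neg_of_pos hn (by positivity)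
    linarith
  calc _ = C * (B * ((1 + ‖x‖) ^ (m + 4) * ‖u t x‖) + B * ((1 + ‖x‖) ^ (m + 4) * ‖v t x‖)) := by
        ring
    _ ≤ _ := by gcongr

end time

end Morawetz

/-- **Morawetz identity.** If `i∂ₜu + Δu = F` with `u(t,·)`, `∂ₜu(t,·)`, `F(t,·)`
Schwartz (locally uniformly in `t`) and `w : ℝ³ → ℝ` smooth with polynomially
bounded derivatives of all orders `≥ 1`, then with
`M_w(t) = 2 Im ∫ ∇w·∇u conj(u) dx` one has
`(d/dt) M_w(t) = ∫ (−ΔΔw)|u|² + 4 ∫ ∂_j∂_k w Re(∂_j conj(u) ∂_k u)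
  + 2 ∫ ∂_j w {F,u}_P^j`. -/
theorem morawetz_identity (u F : ℝ → E3 → ℂ)
    (hu_smooth : ContDiff ℝ (⊤ : ℕ∞) (Function.uncurry u))
    (hF_smooth : ContDiff ℝ (⊤ : ℕ∞) (Function.uncurry F))
    (hu_schwartz : ∀ t : ℝ, ∃ f : SchwartzMap E3 ℂ, ∀ x : E3, f x = u t x)
    (hut_schwartz : ∀ t : ℝ, ∃ f : SchwartzMap E3 ℂ, ∀ x : E3,
        f x = deriv (fun s => u s x) t)
    (hF_schwartz : ∀ t : ℝ, ∃ f : SchwartzMap E3 ℂ, ∀ x : E3, f x = F t x)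
    (hbound : ∀ (k n : ℕ) (T : ℝ), 0 < T → ∃ C : ℝ, ∀ t ∈ Set.Icc (-T) T, ∀ x : E3,
        ‖x‖ ^ k * ‖iteratedFDeriv ℝ n (u t) x‖
          + ‖x‖ ^ k * ‖iteratedFDeriv ℝ n (fun y => deriv (fun s => u s y) t) x‖
          + ‖x‖ ^ k * ‖iteratedFDeriv ℝ n (F t) x‖ ≤ C)
    (heq : ∀ (t : ℝ) (x : E3),
        Complex.I * deriv (fun s => u s x) t + lap (u t) x = F t x)
    (w : E3 → ℝ) (hw : ContDiff ℝ (⊤ : ℕ∞) w)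
    (hwpoly : ∀ n : ℕ, 1 ≤ n → ∃ C : ℝ, ∃ m : ℕ, ∀ x : E3,
        ‖iteratedFDeriv ℝ n w x‖ ≤ C * (1 + ‖x‖) ^ m)
    (t : ℝ) :
    HasDerivAt
      (fun s => 2 * (∫ x : E3,
          (∑ j : Fin 3, ((pdR j w x : ℝ) : ℂ) * pd j (u s) x)
            * (starRingEnd ℂ) (u s x)).im)
      ((∫ x : E3, (-(lapR (lapR w) x)) * ‖u t x‖ ^ 2)
        + 4 * (∫ x : E3, ∑ j : Fin 3, ∑ k : Fin 3,
            pdR2 j k w x * ((starRingEnd ℂ) (pd j (u t) x) * pd k (u t) x).re)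
        + 2 * ∫ x : E3, ∑ j : Fin 3,
            pdR j w x * (F t x * (starRingEnd ℂ) (pd j (u t) x)
              - u t x * (starRingEnd ℂ) (pd j (F t) x)).re) t := by
  set v : ℝ → E3 → ℂ := fun s y => deriv (fun r => u r y) s with hv
  have hw' : ∀ j, (pdR j w).HasTemperateGrowth := Morawetz.temp_pdR hw hwpoly
  have Su : ∀ s, Morawetz.S (u s) := fun s => by
    obtain ⟨f, hf⟩ := hu_schwartz s
    exact ⟨f, funext hf⟩
  have Sv : ∀ s, Morawetz.S (v s) := fun s => by
    obtain ⟨f, hf⟩ := hut_schwartz s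
    exact ⟨f, funext hf⟩
  have SF : ∀ s, Morawetz.S (F s) := fun s => by
    obtain ⟨f, hf⟩ := hF_schwartz s
    exact ⟨f, funext hf⟩
  rw [← Morawetz.static_identity hw hw' (Su t) (SF t) (Sv t) (heq t)]
  have hT : 0 < |t| + 1 := by positivity
  choose K hK using fun j => Morawetz.term_bound (u := u) (v := v) (F := F) hbound (|t| + 1) hT
    (hw' j) j
  have SG : ∀ s, Morawetz.S (fun x => (∑ j : Fin 3, ((pdR j w x : ℝ) : ℂ) * pd j (u s) x)
            * (starRingEnd ℂ) (u s x)) := fun s =>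
    (Morawetz.S.sum fun j => Morawetz.S.tmul (Morawetz.temp_ofReal (hw' j))
      ((Su s).pd j)).mul (Su s).conj
  have SG' : Morawetz.S (fun x => ∑ j, (pdR j w x : ℂ) * (pd j (v t) x * (starRingEnd ℂ) (u t x)
        + pd j (u t) x * (starRingEnd ℂ) (v t x))) :=
    Morawetz.S.sum fun j => Morawetz.S.tmul (Morawetz.temp_ofReal (hw' j))
      ((((Sv t).pd j).mul (Su t).conj).add (((Su t).pd j).mul (Sv t).conj))
  have main := (hasDerivAt_integral_of_dominated_loc_of_deriv_le (μ := (volume : Measure E3))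
    (x₀ := t) (s := Set.Icc (t - 1) (t + 1))
    (F := fun s x => (∑ j : Fin 3, ((pdR j w x : ℝ) : ℂ) * pd j (u s) x)
            * (starRingEnd ℂ) (u s x))
    (F' := fun s x => ∑ j, (pdR j w x : ℂ) * (pd j (v s) x * (starRingEnd ℂ) (u s x)
        + pd j (u s) x * (starRingEnd ℂ) (v s x)))
    (bound := fun x => ∑ j, K j * ((1 + ‖x‖) ^ 4)⁻¹)
    (Icc_mem_nhds (by linarith) (by linarith))
    (Eventually.of_forall fun s => (SG s).integrable.aestronglyMeasurable)
    (SG t).integrable SG'.integrable.aestronglyMeasurable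
    (ae_of_all _ fun x s hs => (norm_sum_le _ _).trans (Finset.sum_le_sum fun j _ =>
      hK j s ⟨by linarith [hs.1, neg_abs_le t], by linarith [hs.2, le_abs_self t]⟩ x))
    (integrable_finsetSum _ fun j _ => Morawetz.integrable_weight (K j))
    (ae_of_all _ fun x s _ => ?_)).2
  · have h2 := (Complex.imCLM.hasFDerivAt.comp_hasDerivAt t main).const_mul 2
    exact h2
  · have hd : Differentiable ℝ (Function.uncurry u) := hu_smooth.differentiable (by simp)
    have h1 : HasDerivAt (fun r => u r x) (v s x) s :=
      (Morawetz.slice_t hd s x).differentiableAt.hasDerivAt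
    have h2 : HasDerivAt (fun r => (starRingEnd ℂ) (u r x)) ((starRingEnd ℂ) (v s x)) s :=
      (Complex.conjCLE : ℂ →L[ℝ] ℂ).hasFDerivAt.comp_hasDerivAt s h1
    have h3 : HasDerivAt (fun r => ∑ j : Fin 3, ((pdR j w x : ℝ) : ℂ) * pd j (u r) x)
        (∑ j : Fin 3, ((pdR j w x : ℝ) : ℂ) * pd j (v s) x) s :=
      HasDerivAt.fun_sum fun j _ => (Morawetz.hasDerivAt_pd hu_smooth j s x).const_mul _
    refine (h3.mul h2).congr_deriv ?_
    simp only [Fin.sum_univ_three]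
    ring
end
end

section
/- (Virial identity for INLS with general weight) Let u be a smooth Schwartz solution of (INLS) and let w : ℝ³ → ℝ be smooth with all derivatives of order ≥ 1 polynomially bounded. Define V(t;w) = 2 Im ∫_{ℝ³} conj(u(t,x)) ∇w(x) · ∇u(t,x) dx. Then for every t, (d/dt) V(t;w) = ∫_{ℝ³} [ (−ΔΔw)(x) |u|² + 4 ∂_j∂_k w(x) Re( ∂_j conj(u) ∂_k u ) + 4a (x·∇w(x)/|x|⁴) |u|² ] dx + λ b ∫_{ℝ³} (x·∇w(x)/|x|^{2+b}) |u|⁴ dx + λ ∫_{ℝ³} Δw(x) |u|⁴/|x|^b dx, where all functions of u are evaluated at (t,x) and repeated indices j,k ∈ {1,2,3} are summed. -/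
open MeasureTheory Real Filter
open scoped BigOperators Topology

noncomputable section

open scoped SchwartzMap LineDeriv

/-- `f` is (the underlying function of) a real Schwartz function. -/
def Sch (f : E3 → ℝ) : Prop := ∃ g : SchwartzMap E3 ℝ, ∀ x, g x = f x

/-- Line derivative in the `j`-th coordinate direction. -/
def DD (j : Fin 3) (f : E3 → ℝ) (d : ℝ) (x : E3) : Prop := HasLineDerivAt ℝ f d x (e3 j)

lemma Sch.coe_eq {f : E3 → ℝ} (h : Sch f) : ∃ g : SchwartzMap E3 ℝ, f = g := by
  obtain ⟨g, hg⟩ := h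
  exact ⟨g, funext fun x => (hg x).symm⟩

lemma Sch.add {f g : E3 → ℝ} (hf : Sch f) (hg : Sch g) : Sch (fun x => f x + g x) := by
  obtain ⟨F, rfl⟩ := hf.coe_eq
  obtain ⟨G, rfl⟩ := hg.coe_eq
  exact ⟨F + G, fun x => by simp⟩

lemma Sch.sub {f g : E3 → ℝ} (hf : Sch f) (hg : Sch g) : Sch (fun x => f x - g x) := by
  obtain ⟨F, rfl⟩ := hf.coe_eq
  obtain ⟨G, rfl⟩ := hg.coe_eq
  exact ⟨F - G, fun x => by simp⟩

lemma Sch.const_mul {f : E3 → ℝ} (c : ℝ) (hf : Sch f) : Sch (fun x => c * f x) := by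
  obtain ⟨F, rfl⟩ := hf.coe_eq
  exact ⟨c • F, fun x => by simp⟩

lemma Sch.sum {f : Fin 3 → E3 → ℝ} (hf : ∀ j, Sch (f j)) : Sch (fun x => ∑ j, f j x) := by
  simp only [Fin.sum_univ_three]
  exact ((hf 0).add (hf 1)).add (hf 2)

lemma Sch.tmul {f g : E3 → ℝ} (hg : g.HasTemperateGrowth) (hf : Sch f) :
    Sch (fun x => g x * f x) := by
  obtain ⟨F, rfl⟩ := hf.coe_eq
  exact ⟨SchwartzMap.smulLeftCLM ℝ g F, fun x => by
    rw [SchwartzMap.smulLeftCLM_apply_apply hg]; simp⟩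

lemma Sch.temp {f : E3 → ℝ} (hf : Sch f) : f.HasTemperateGrowth := by
  obtain ⟨F, rfl⟩ := hf.coe_eq
  exact F.hasTemperateGrowth

lemma Sch.mul {f g : E3 → ℝ} (hf : Sch f) (hg : Sch g) : Sch (fun x => f x * g x) :=
  Sch.tmul hf.temp hg

lemma Sch.pdR {f : E3 → ℝ} (hf : Sch f) (j : Fin 3) : Sch (pdR j f) := by
  obtain ⟨F, rfl⟩ := hf.coe_eq
  exact ⟨∂_{e3 j} F, fun x => by
    rw [SchwartzMap.lineDerivOp_apply_eq_fderiv]; rfl⟩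

lemma Sch.integrable {f : E3 → ℝ} (hf : Sch f) : Integrable f := by
  obtain ⟨F, rfl⟩ := hf.coe_eq
  exact F.integrable

lemma temp_pdR {f : E3 → ℝ} (hf : f.HasTemperateGrowth) (j : Fin 3) :
    (pdR j f).HasTemperateGrowth := by
  have h1 : (fderiv ℝ f).HasTemperateGrowth := by
    refine ⟨hf.1.fderiv_right (by simp), fun n => ?_⟩
    obtain ⟨k, C, h⟩ := hf.2 (n+1)
    exact ⟨k, C, fun x => by rw [norm_iteratedFDeriv_fderiv]; exact h x⟩
  exact (ContinuousLinearMap.hasTemperateGrowth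
    (ContinuousLinearMap.apply ℝ ℝ (e3 j))).comp h1

lemma temp_pdR_w {w : E3 → ℝ} (hw : ContDiff ℝ (⊤ : ℕ∞) w)
    (hwpoly : ∀ n : ℕ, 1 ≤ n → ∃ C : ℝ, ∃ m : ℕ, ∀ x : E3,
        ‖iteratedFDeriv ℝ n w x‖ ≤ C * (1 + ‖x‖) ^ m) (j : Fin 3) :
    (pdR j w).HasTemperateGrowth := by
  have h1 : (fderiv ℝ w).HasTemperateGrowth := by
    refine ⟨hw.fderiv_right (by simp), fun n => ?_⟩
    obtain ⟨C, m, h⟩ := hwpoly (n+1) (by omega)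
    exact ⟨m, C, fun x => by rw [norm_iteratedFDeriv_fderiv]; exact h x⟩
  exact (ContinuousLinearMap.hasTemperateGrowth
    (ContinuousLinearMap.apply ℝ ℝ (e3 j))).comp h1

lemma temp_sum {f : Fin 3 → E3 → ℝ} (hf : ∀ j, (f j).HasTemperateGrowth) :
    (fun x => ∑ j, f j x).HasTemperateGrowth := by
  simp only [Fin.sum_univ_three]
  exact ((hf 0).add (hf 1)).add (hf 2)

lemma DD_of_contDiff {f : E3 → ℝ} (hf : ContDiff ℝ (⊤ : ℕ∞) f) (j : Fin 3) (x : E3) :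
    DD j f (pdR j f x) x :=
  ((hf.differentiable (by simp)) x).hasFDerivAt.hasLineDerivAt _

lemma DD_temp {f : E3 → ℝ} (hf : f.HasTemperateGrowth) (j : Fin 3) (x : E3) :
    DD j f (pdR j f x) x := DD_of_contDiff hf.1 j x

lemma Sch.DD {f : E3 → ℝ} (hf : Sch f) (j : Fin 3) (x : E3) :
    DD j f (_root_.pdR j f x) x := DD_temp hf.temp j x

lemma DD.unique {j : Fin 3} {f : E3 → ℝ} {d d' : ℝ} {x : E3} (h : DD j f d x)
    (h' : DD j f d' x) : d = d' := HasLineDerivAt.unique h h'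

lemma DD.add {j : Fin 3} {f g : E3 → ℝ} {d d' : ℝ} {x : E3} (h : DD j f d x)
    (h' : DD j g d' x) : DD j (fun y => f y + g y) (d + d') x := HasDerivAt.add h h'

lemma DD.sub {j : Fin 3} {f g : E3 → ℝ} {d d' : ℝ} {x : E3} (h : DD j f d x)
    (h' : DD j g d' x) : DD j (fun y => f y - g y) (d - d') x := HasDerivAt.sub h h'

lemma DD.const_mul {j : Fin 3} {f : E3 → ℝ} {d : ℝ} {x : E3} (c : ℝ) (h : DD j f d x) :
    DD j (fun y => c * f y) (c * d) x := HasDerivAt.const_mul c h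

lemma DD.mul {j : Fin 3} {f g : E3 → ℝ} {d d' : ℝ} {x : E3} (h : DD j f d x)
    (h' : DD j g d' x) : DD j (fun y => f y * g y) (d * g x + f x * d') x := by
  have := HasDerivAt.mul h h'
  simpa using! this

lemma DD.sum {j : Fin 3} {f : Fin 3 → E3 → ℝ} {d : Fin 3 → ℝ} {x : E3}
    (h : ∀ k, DD j (f k) (d k) x) :
    DD j (fun y => ∑ k, f k y) (∑ k, d k) x := by
  simp only [Fin.sum_univ_three]
  exact ((h 0).add (h 1)).add (h 2)

lemma pdR_comm {f : E3 → ℝ} (hf : ContDiff ℝ (⊤ : ℕ∞) f) (j k : Fin 3) (x : E3) :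
    pdR j (pdR k f) x = pdR k (pdR j f) x := by
  have hsym : IsSymmSndFDerivAt ℝ f x :=
    (hf.contDiffAt).isSymmSndFDerivAt (by simp; exact WithTop.coe_le_coe.2 (le_top : (2:ℕ∞) ≤ ⊤))
  have hd : DifferentiableAt ℝ (fderiv ℝ f) x :=
    ((hf.fderiv_right (m := 1) (by norm_cast)).differentiable (by simp)) x
  have key : ∀ i l : Fin 3, pdR i (pdR l f) x = fderiv ℝ (fderiv ℝ f) x (e3 i) (e3 l) := by
    intro i l
    unfold pdR
    rw [fderiv_clm_apply hd (differentiableAt_const _)]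
    simp
  rw [key, key]
  exact hsym.eq _ _

/-- Integral of a line derivative vanishes. -/
lemma integral_DD_zero {j : Fin 3} {f f' : E3 → ℝ} (hf : Integrable f) (hf' : Integrable f')
    (h : ∀ x, DD j f (f' x) x) : ∫ x, f' x = 0 := by
  have := integral_bilinear_hasLineDerivAt_right_eq_neg_left_of_integrable
    (μ := (volume : Measure E3)) (f := fun _ : E3 => (1:ℝ)) (f' := fun _ => (0:ℝ))
    (g := f) (g' := f') (v := e3 j) (B := ContinuousLinearMap.mul ℝ ℝ)
    (by simp) (by simpa using hf') (by simpa using hf)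
    (fun x _ => by simpa [HasLineDerivAt] using hasDerivAt_const (0:ℝ) (1:ℝ)) (fun x _ => h x)
  simpa using this

lemma DD_zero_of_bound {j : Fin 3} {f : E3 → ℝ} {C : ℝ}
    (h : ∀ x, ‖x‖ ≤ 1 → |f x| ≤ C * ‖x‖ ^ 2) : DD j f 0 0 := by
  have h1 : HasFDerivAt f (0 : E3 →L[ℝ] ℝ) 0 := by
    apply Asymptotics.IsBigO.hasFDerivAt (n := 2) _ (by norm_num)
    apply Asymptotics.IsBigO.of_bound C
    filter_upwards [Metric.closedBall_mem_nhds (0 : E3) one_pos] with x hx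
    have := h x (by simpa using hx)
    simpa using this
  simpa using! h1.hasLineDerivAt (e3 j)

lemma ae_ne_zero : ∀ᵐ x : E3, x ≠ 0 := by
  have : (volume : Measure E3) {0} = 0 := measure_singleton 0
  exact compl_mem_ae_iff.2 this

lemma kernel_int {k S : E3 → ℝ} (hk : Measurable k) (hS : Sch S) {c C : ℝ}
    (h1 : ∀ x, x ≠ 0 → ‖x‖ ≤ 1 → |k x * S x| ≤ C)
    (h2 : ∀ x, 1 ≤ ‖x‖ → |k x| ≤ c) : Integrable (fun x => k x * S x) := by
  have hi : Integrable (fun x => (Metric.closedBall (0:E3) 1).indicator (fun _ => C) x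
      + c * |S x|) := by
    apply Integrable.add
    · rw [integrable_indicator_iff measurableSet_closedBall]
      exact integrableOn_const (measure_closedBall_lt_top.ne)
    · exact hS.integrable.abs.const_mul c
  have hc : 0 ≤ c := by
    refine (abs_nonneg _).trans (h2 (e3 0) ?_)
    simp [e3]
  refine hi.mono' ?_ ?_
  · exact hk.aestronglyMeasurable.mul hS.integrable.1
  · filter_upwards [ae_ne_zero] with x hx
    rw [Real.norm_eq_abs]
    by_cases h : ‖x‖ ≤ 1
    · rw [Set.indicator_of_mem (by simpa using h)]
      have := h1 x hx h
      have : 0 ≤ c * |S x| := by positivity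
      linarith
    · rw [Set.indicator_of_notMem (by simpa using h), abs_mul, zero_add]
      exact mul_le_mul_of_nonneg_right (h2 x (by linarith)) (abs_nonneg _)

lemma temp_bdd {f : E3 → ℝ} (hf : f.HasTemperateGrowth) :
    ∃ C, 0 ≤ C ∧ ∀ x : E3, ‖x‖ ≤ 1 → |f x| ≤ C := by
  obtain ⟨C, hC⟩ := (isCompact_closedBall (0:E3) 1).exists_bound_of_continuousOn
    hf.1.continuous.continuousOn
  refine ⟨C, (norm_nonneg _).trans (hC 0 (by simp)), fun x hx => hC x (by simpa using hx)⟩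

lemma DD_normsq (j : Fin 3) (x : E3) : DD j (fun y => ‖y‖ ^ 2) (2 * x j) x := by
  have := (hasStrictFDerivAt_norm_sq x).hasFDerivAt.hasLineDerivAt (e3 j)
  simpa [e3, EuclideanSpace.inner_single_right] using! this

lemma DD_inv_sq (a : ℝ) (j : Fin 3) {x : E3} (hx : x ≠ 0) :
    DD j (fun y => a / ‖y‖ ^ 2) (-2 * (a * (x j / ‖x‖ ^ 4))) x := by
  have h := DD_normsq j x
  have hx' : ‖x‖ ≠ 0 := by simpa using hx
  have := (HasDerivAt.inv h (by simpa using hx)).const_mul a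
  unfold DD HasLineDerivAt
  convert! this using 1
  simp
  field_simp

lemma DD_rpow (b : ℝ) (j : Fin 3) {x : E3} (hx : x ≠ 0) :
    DD j (fun y => ‖y‖ ^ (-b)) (-b * (x j * ‖x‖ ^ (-(2 + b)))) x := by
  have h := DD_normsq j x
  have hx' : 0 < ‖x‖ := by simpa using hx
  have := HasDerivAt.rpow_const (p := -b/2) h (Or.inl (by simpa using hx))
  have e : ∀ y : E3, ∀ c : ℝ, (‖y‖ ^ 2) ^ (c / 2) = ‖y‖ ^ c := by
    intro y c
    rw [← Real.rpow_natCast, ← Real.rpow_mul (norm_nonneg _)]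
    congr 1; push_cast; ring
  unfold DD HasLineDerivAt
  convert! this using 1
  · funext s; simp only []; rw [e]
  · simp only [zero_smul, add_zero]
    rw [show -b/2 - 1 = (-(2+b))/2 by ring, e]; ring
lemma abs_coord_le (x : E3) (j : Fin 3) : |x j| ≤ ‖x‖ := by
  simpa using PiLp.norm_apply_le x j

/-- Smooth part of the virial flux. -/
def fluxS (w p q r s : E3 → ℝ) (k : Fin 3) (x : E3) : ℝ :=
  2 * (pdR k w x * (p x * s x - q x * r x))
  - 4 * (∑ j, pdR j w x * (pdR k p x * pdR j p x + pdR k q x * pdR j q x))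
  + 2 * (pdR k w x * (∑ j, (pdR j p x * pdR j p x + pdR j q x * pdR j q x)))
  - 2 * (lapR w x * (pdR k p x * p x + pdR k q x * q x))
  + pdR k (lapR w) x * (p x * p x + q x * q x)

lemma fluxS_sch {w p q r s : E3 → ℝ} (hW : ∀ j, (pdR j w).HasTemperateGrowth)
    (hp : Sch p) (hq : Sch q) (hr : Sch r) (hs : Sch s) (k : Fin 3) :
    Sch (fluxS w p q r s k) := by
  have hL : (lapR w).HasTemperateGrowth := temp_sum fun j => temp_pdR (hW j) j
  refine ((((Sch.const_mul 2 (Sch.tmul (hW k) ((hp.mul hs).sub (hq.mul hr)))).sub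
    (Sch.const_mul 4 (Sch.sum fun j => Sch.tmul (hW j)
      (((hp.pdR k).mul (hp.pdR j)).add ((hq.pdR k).mul (hq.pdR j)))))).add
    (Sch.const_mul 2 (Sch.tmul (hW k) (Sch.sum fun j =>
      ((hp.pdR j).mul (hp.pdR j)).add ((hq.pdR j).mul (hq.pdR j)))))).sub
    (Sch.const_mul 2 (Sch.tmul hL (((hp.pdR k).mul hp).add ((hq.pdR k).mul hq))))).add
    (Sch.tmul (temp_pdR hL k) ((hp.mul hp).add (hq.mul hq)))

lemma fluxS_DD {w p q r s : E3 → ℝ} (hW : ∀ j, (pdR j w).HasTemperateGrowth)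
    (hp : Sch p) (hq : Sch q) (hr : Sch r) (hs : Sch s) (k : Fin 3) (x : E3) :
    pdR k (fluxS w p q r s k) x =
  2 * (pdR k (pdR k w) x * (p x * s x - q x * r x) + pdR k w x *
    ((pdR k p x * s x + p x * pdR k s x) - (pdR k q x * r x + q x * pdR k r x)))
  - 4 * (∑ j, (pdR k (pdR j w) x * (pdR k p x * pdR j p x + pdR k q x * pdR j q x)
      + pdR j w x * ((pdR k (pdR k p) x * pdR j p x + pdR k p x * pdR k (pdR j p) x)
        + (pdR k (pdR k q) x * pdR j q x + pdR k q x * pdR k (pdR j q) x))))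
  + 2 * (pdR k (pdR k w) x * (∑ j, (pdR j p x * pdR j p x + pdR j q x * pdR j q x))
    + pdR k w x * (∑ j, ((pdR k (pdR j p) x * pdR j p x + pdR j p x * pdR k (pdR j p) x)
      + (pdR k (pdR j q) x * pdR j q x + pdR j q x * pdR k (pdR j q) x))))
  - 2 * (pdR k (lapR w) x * (pdR k p x * p x + pdR k q x * q x)
    + lapR w x * ((pdR k (pdR k p) x * p x + pdR k p x * pdR k p x)
       + (pdR k (pdR k q) x * q x + pdR k q x * pdR k q x)))
  + (pdR k (pdR k (lapR w)) x * (p x * p x + q x * q x)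
    + pdR k (lapR w) x * ((pdR k p x * p x + p x * pdR k p x)
      + (pdR k q x * q x + q x * pdR k q x))) := by
  have hL : (lapR w).HasTemperateGrowth := temp_sum fun j => temp_pdR (hW j) j
  refine ((fluxS_sch hW hp hq hr hs k).DD k x).unique ?_
  have P := hp.DD k x
  have Q := hq.DD k x
  have P' := fun j => (hp.pdR j).DD k x
  have Q' := fun j => (hq.pdR j).DD k x
  have W' := fun j => DD_temp (hW j) k x
  exact (((((((W' k).mul ((P.mul (hs.DD k x)).sub (Q.mul (hr.DD k x)))).const_mul 2).sub
    ((DD.sum fun j => (W' j).mul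
      (((P' k).mul (P' j)).add ((Q' k).mul (Q' j)))).const_mul 4)).add
    (((W' k).mul (DD.sum fun j =>
      ((P' j).mul (P' j)).add ((Q' j).mul (Q' j)))).const_mul 2)).sub
    (((DD_temp hL k x).mul (((P' k).mul P).add ((Q' k).mul Q))).const_mul 2)).add
    ((DD_temp (temp_pdR hL k) k x).mul ((P.mul P).add (Q.mul Q))))

/-- Singular part of the flux: derivative away from the origin. -/
def fluxSing' (a b lam : ℝ) (w p q : E3 → ℝ) (k : Fin 3) (x : E3) : ℝ :=
  2 * ((-2) * (a * (x k / ‖x‖ ^ 4) * (pdR k w x * (p x * p x + q x * q x)))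
    + a / ‖x‖ ^ 2 * (pdR k (pdR k w) x * (p x * p x + q x * q x)
    + pdR k w x * ((pdR k p x * p x + p x * pdR k p x)
      + (pdR k q x * q x + q x * pdR k q x))))
  + lam * ((-b) * (x k * ‖x‖ ^ (-(2 + b)) * (pdR k w x * ((p x * p x + q x * q x) * (p x * p x + q x * q x))))
    + ‖x‖ ^ (-b) * (pdR k (pdR k w) x * ((p x * p x + q x * q x) * (p x * p x + q x * q x))
    + pdR k w x * (((pdR k p x * p x + p x * pdR k p x)
      + (pdR k q x * q x + q x * pdR k q x)) * (p x * p x + q x * q x)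
      + (p x * p x + q x * q x) * ((pdR k p x * p x + p x * pdR k p x)
      + (pdR k q x * q x + q x * pdR k q x)))))

/-- Pointwise identity. -/
lemma pointwise {a b lam : ℝ} {w p q r s : E3 → ℝ}
    (hW : ∀ j, (pdR j w).HasTemperateGrowth)
    (hp : Sch p) (hq : Sch q) (hr : Sch r) (hs : Sch s) (x : E3)
    (e1 : - s x + lapR p x - a / ‖x‖ ^ 2 * p x =
      lam * ‖x‖ ^ (-b) * (p x * p x + q x * q x) * p x)
    (e2 : r x + lapR q x - a / ‖x‖ ^ 2 * q x =
      lam * ‖x‖ ^ (-b) * (p x * p x + q x * q x) * q x) :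
    2 * (∑ j, pdR j w x * ((r x * pdR j q x - s x * pdR j p x)
        + (p x * pdR j s x - q x * pdR j r x)))
    - (((-(lapR (lapR w) x)) * (p x * p x + q x * q x)
          + 4 * ∑ j : Fin 3, ∑ k : Fin 3,
              pdR2 j k w x * (pdR j p x * pdR k p x + pdR j q x * pdR k q x)
          + 4 * ∑ j : Fin 3, a * (x j / ‖x‖ ^ 4) * (pdR j w x * (p x * p x + q x * q x)))
      + lam * b * (∑ j : Fin 3, x j * ‖x‖ ^ (-(2 + b)) *
          (pdR j w x * ((p x * p x + q x * q x) * (p x * p x + q x * q x))))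
      + lam * (‖x‖ ^ (-b) * (lapR w x * ((p x * p x + q x * q x) * (p x * p x + q x * q x)))))
    = ∑ k, (pdR k (fluxS w p q r s k) x + fluxSing' a b lam w p q k x) := by
  have c10 := pdR_comm hp.temp.1 1 0 x
  have c20 := pdR_comm hp.temp.1 2 0 x
  have c21 := pdR_comm hp.temp.1 2 1 x
  have d10 := pdR_comm hq.temp.1 1 0 x
  have d20 := pdR_comm hq.temp.1 2 0 x
  have d21 := pdR_comm hq.temp.1 2 1 x
  simp only [fluxS_DD hW hp hq hr hs]
  rw [show lapR (lapR w) x = ∑ k, pdR k (pdR k (lapR w)) x from rfl]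
  have e3 : lapR w x = ∑ k, pdR k (pdR k w) x := rfl
  rw [show lapR p x = ∑ k, pdR k (pdR k p) x from rfl] at e1
  rw [show lapR q x = ∑ k, pdR k (pdR k q) x from rfl] at e2
  simp only [fluxSing', Fin.sum_univ_three, pdR2, e3] at *
  simp only [c10, c20, c21, d10, d20, d21]
  linear_combination (4 * (pdR 0 w x * pdR 0 p x + pdR 1 w x * pdR 1 p x + pdR 2 w x * pdR 2 p x)
      + 2 * (pdR 0 (pdR 0 w) x + pdR 1 (pdR 1 w) x + pdR 2 (pdR 2 w) x) * p x) * e1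
    + (4 * (pdR 0 w x * pdR 0 q x + pdR 1 w x * pdR 1 q x + pdR 2 w x * pdR 2 q x)
      + 2 * (pdR 0 (pdR 0 w) x + pdR 1 (pdR 1 w) x + pdR 2 (pdR 2 w) x) * q x) * e2
/-- `S = O(|x|^m)` on the unit ball. -/
def OrdZ (m : ℕ) (S : E3 → ℝ) : Prop :=
  ∃ D : ℝ, 0 ≤ D ∧ ∀ x : E3, ‖x‖ ≤ 1 → |S x| ≤ D * ‖x‖ ^ m

lemma OrdZ.add {m : ℕ} {S T : E3 → ℝ} (hS : OrdZ m S) (hT : OrdZ m T) :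
    OrdZ m (fun x => S x + T x) := by
  obtain ⟨D, hD, h⟩ := hS
  obtain ⟨D', hD', h'⟩ := hT
  refine ⟨D + D', by positivity, fun x hx => (abs_add_le _ _).trans ?_⟩
  have := h x hx
  have := h' x hx
  linarith

lemma OrdZ.mul {m n : ℕ} {S T : E3 → ℝ} (hS : OrdZ m S) (hT : OrdZ n T) :
    OrdZ (m + n) (fun x => S x * T x) := by
  obtain ⟨D, hD, h⟩ := hS
  obtain ⟨D', hD', h'⟩ := hT
  refine ⟨D * D', by positivity, fun x hx => ?_⟩
  rw [abs_mul, pow_add]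
  calc |S x| * |T x| ≤ (D * ‖x‖ ^ m) * (D' * ‖x‖ ^ n) :=
        mul_le_mul (h x hx) (h' x hx) (abs_nonneg _) (by positivity)
    _ = _ := by ring

lemma OrdZ.mono {m n : ℕ} {S : E3 → ℝ} (hS : OrdZ m S) (h : n ≤ m) : OrdZ n S := by
  obtain ⟨D, hD, hh⟩ := hS
  refine ⟨D, hD, fun x hx => (hh x hx).trans ?_⟩
  exact mul_le_mul_of_nonneg_left (pow_le_pow_of_le_one (norm_nonneg _) hx h) hD

lemma OrdZ.temp {S : E3 → ℝ} (hS : S.HasTemperateGrowth) : OrdZ 0 S := by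
  obtain ⟨C, hC, h⟩ := temp_bdd hS
  exact ⟨C, hC, fun x hx => by simpa using h x hx⟩

lemma OrdZ.ker {m n : ℕ} {k S : E3 → ℝ} {c : ℝ}
    (hk : ∀ x : E3, ‖x‖ ≤ 1 → |k x| * ‖x‖ ^ m ≤ c) (hS : OrdZ (m + n) S) :
    OrdZ n (fun x => k x * S x) := by
  obtain ⟨D, hD, h⟩ := hS
  have hc : 0 ≤ c := le_trans (by positivity) (hk 0 (by simp))
  refine ⟨c * D, by positivity, fun x hx => ?_⟩
  rw [abs_mul]
  calc |k x| * |S x| ≤ |k x| * (D * ‖x‖ ^ (m + n)) :=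
        mul_le_mul_of_nonneg_left (h x hx) (abs_nonneg _)
    _ = (|k x| * ‖x‖ ^ m) * (D * ‖x‖ ^ n) := by ring
    _ ≤ c * (D * ‖x‖ ^ n) := mul_le_mul_of_nonneg_right (hk x hx) (by positivity)
    _ = _ := by ring

lemma OrdZ.int {m : ℕ} {k S : E3 → ℝ} {c : ℝ} (hm : Measurable k)
    (hk : ∀ x : E3, ‖x‖ ≤ 1 → |k x| * ‖x‖ ^ m ≤ c) (h2 : ∀ x, 1 ≤ ‖x‖ → |k x| ≤ c)
    (hS : OrdZ m S) (hSch : Sch S) : Integrable (fun x => k x * S x) := by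
  obtain ⟨D, hD, h⟩ := OrdZ.ker (n := 0) hk hS
  exact kernel_int (C := D) hm hSch (fun x _ hx => by simpa using h x hx) h2

lemma k1_a (a : ℝ) (j : Fin 3) (x : E3) : |a * (x j / ‖x‖ ^ 4)| * ‖x‖ ^ 3 ≤ |a| := by
  rcases eq_or_ne x 0 with rfl | hx
  · simp
  have hx' : 0 < ‖x‖ := by simpa using hx
  have := abs_coord_le x j
  rw [abs_mul, abs_div, abs_of_pos (pow_pos hx' 4), mul_assoc]
  apply mul_le_of_le_one_right (abs_nonneg _)
  rw [div_mul_eq_mul_div, div_le_one (by positivity)]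
  nlinarith [pow_pos hx' 3]

lemma k1_b (a : ℝ) (j : Fin 3) (x : E3) (hx : 1 ≤ ‖x‖) : |a * (x j / ‖x‖ ^ 4)| ≤ |a| :=
  le_trans (le_mul_of_one_le_right (abs_nonneg _) (one_le_pow₀ hx)) (k1_a a j x)

lemma k2_a (a : ℝ) (x : E3) : |a / ‖x‖ ^ 2| * ‖x‖ ^ 2 ≤ |a| := by
  rcases eq_or_ne x 0 with rfl | hx
  · simp
  have hx' : 0 < ‖x‖ := by simpa using hx
  rw [abs_div, abs_of_pos (pow_pos hx' 2)]
  field_simp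
  rfl

lemma k2_b (a : ℝ) (x : E3) (hx : 1 ≤ ‖x‖) : |a / ‖x‖ ^ 2| ≤ |a| :=
  le_trans (le_mul_of_one_le_right (abs_nonneg _) (one_le_pow₀ hx)) (k2_a a x)

lemma k4_a {b : ℝ} (hb1 : b < 1) (x : E3) (h : ‖x‖ ≤ 1) :
    |‖x‖ ^ (-b)| * ‖x‖ ^ 1 ≤ 1 := by
  rcases eq_or_ne x 0 with rfl | hx
  · simp
  have hx' : 0 < ‖x‖ := by simpa using hx
  rw [abs_of_nonneg (by positivity), ← Real.rpow_natCast, ← Real.rpow_add hx']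
  apply Real.rpow_le_one hx'.le h
  push_cast; linarith

lemma k4_b {b : ℝ} (hb0 : 0 < b) (x : E3) (h : 1 ≤ ‖x‖) : |‖x‖ ^ (-b)| ≤ 1 := by
  rw [abs_of_nonneg (by positivity)]
  exact Real.rpow_le_one_of_one_le_of_nonpos h (by linarith)

lemma k3_a {b : ℝ} (hb1 : b < 1) (j : Fin 3) (x : E3) (h : ‖x‖ ≤ 1) :
    |x j * ‖x‖ ^ (-(2 + b))| * ‖x‖ ^ 2 ≤ 1 := by
  rcases eq_or_ne x 0 with rfl | hx
  · simp
  have hx' : 0 < ‖x‖ := by simpa using hx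
  have h4 := k4_a hb1 x h
  rw [abs_of_nonneg (by positivity), pow_one] at h4
  rw [abs_mul, abs_of_nonneg (show 0 ≤ ‖x‖ ^ (-(2 + b)) by positivity), mul_assoc,
    ← Real.rpow_natCast ‖x‖ 2, ← Real.rpow_add hx',
    show -(2 + b) + ((2:ℕ):ℝ) = -b by push_cast; ring]
  refine le_trans ?_ h4
  rw [mul_comm]
  exact mul_le_mul_of_nonneg_left (abs_coord_le x j) (by positivity)

lemma k3_b {b : ℝ} (hb0 : 0 < b) (j : Fin 3) (x : E3) (h : 1 ≤ ‖x‖) :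
    |x j * ‖x‖ ^ (-(2 + b))| ≤ 1 := by
  have hx' : 0 < ‖x‖ := by linarith
  rw [abs_mul, abs_of_nonneg (show 0 ≤ ‖x‖ ^ (-(2 + b)) by positivity)]
  calc |x j| * ‖x‖ ^ (-(2 + b)) ≤ ‖x‖ ^ (1:ℝ) * ‖x‖ ^ (-(2 + b)) := by
        rw [Real.rpow_one]
        exact mul_le_mul_of_nonneg_right (abs_coord_le x j) (by positivity)
    _ = ‖x‖ ^ (-(1 + b)) := by rw [← Real.rpow_add hx']; congr 1; ring
    _ ≤ 1 := Real.rpow_le_one_of_one_le_of_nonpos h (by linarith)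

lemma int1 (a : ℝ) (j : Fin 3) {S : E3 → ℝ} (hS : Sch S) (h : a ≠ 0 → OrdZ 3 S) :
    Integrable (fun x : E3 => a * (x j / ‖x‖ ^ 4) * S x) := by
  rcases eq_or_ne a 0 with rfl | ha
  · simp
  · exact OrdZ.int (c := |a|) (by fun_prop) (fun x _ => k1_a a j x) (k1_b a j) (h ha) hS

lemma int2 (a : ℝ) {S : E3 → ℝ} (hS : Sch S) (h : a ≠ 0 → OrdZ 2 S) :
    Integrable (fun x : E3 => a / ‖x‖ ^ 2 * S x) := by
  rcases eq_or_ne a 0 with rfl | ha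
  · simp
  · exact OrdZ.int (c := |a|) (by fun_prop) (fun x _ => k2_a a x) (k2_b a) (h ha) hS

lemma int3 {b : ℝ} (hb0 : 0 < b) (hb1 : b < 1) (j : Fin 3) {S : E3 → ℝ} (hS : Sch S)
    (h : OrdZ 2 S) :
    Integrable (fun x : E3 => x j * ‖x‖ ^ (-(2 + b)) * S x) :=
  OrdZ.int (c := 1) (by fun_prop) (fun x => k3_a hb1 j x) (k3_b hb0 j) h hS

lemma int4 {b : ℝ} (hb0 : 0 < b) (hb1 : b < 1) {S : E3 → ℝ} (hS : Sch S)
    (h : OrdZ 1 S) :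
    Integrable (fun x : E3 => ‖x‖ ^ (-b) * S x) :=
  OrdZ.int (c := 1) (by fun_prop) (fun x => k4_a hb1 x) (k4_b hb0) h hS

lemma int_lin {f g h k z : E3 → ℝ} {c d : ℝ} (hf : Integrable f) (hg : Integrable g)
    (hh : Integrable h) (hk : Integrable k) (hz : ∫ x, z x = 0)
    (e : ∀ᵐ x, f x - (g x + c * h x + d * k x) = z x) :
    ∫ x, f x = (∫ x, g x) + c * (∫ x, h x) + d * ∫ x, k x := by
  have h1 : Integrable (fun x => g x + c * h x) := hg.add (hh.const_mul c)
  have h2 : Integrable (fun x => g x + c * h x + d * k x) := h1.add (hk.const_mul d)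
  rw [← integral_congr_ae e, integral_sub hf h2, integral_add h1 (hk.const_mul d),
    integral_add hg (hh.const_mul c), integral_const_mul, integral_const_mul] at hz
  linarith

lemma core {a b lam : ℝ} (hb0 : 0 < b) (hb1 : b < 1) {w p q r s : E3 → ℝ}
    (hW : ∀ j, (pdR j w).HasTemperateGrowth)
    (hp : Sch p) (hq : Sch q) (hr : Sch r) (hs : Sch s)
    (e1 : ∀ x : E3, x ≠ 0 → - s x + lapR p x - a / ‖x‖ ^ 2 * p x =
      lam * ‖x‖ ^ (-b) * (p x * p x + q x * q x) * p x)
    (e2 : ∀ x : E3, x ≠ 0 → r x + lapR q x - a / ‖x‖ ^ 2 * q x =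
      lam * ‖x‖ ^ (-b) * (p x * p x + q x * q x) * q x)
    (op : OrdZ 1 p) (oq : OrdZ 1 q) (op2 : a ≠ 0 → OrdZ 2 p) (oq2 : a ≠ 0 → OrdZ 2 q) :
    ∫ x, 2 * (∑ j, pdR j w x * ((r x * pdR j q x - s x * pdR j p x)
        + (p x * pdR j s x - q x * pdR j r x)))
    = (∫ x, ((-(lapR (lapR w) x)) * (p x * p x + q x * q x)
          + 4 * ∑ j : Fin 3, ∑ k : Fin 3,
              pdR2 j k w x * (pdR j p x * pdR k p x + pdR j q x * pdR k q x)
          + 4 * ∑ j : Fin 3, a * (x j / ‖x‖ ^ 4) * (pdR j w x * (p x * p x + q x * q x))))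
      + lam * b * (∫ x, ∑ j : Fin 3, x j * ‖x‖ ^ (-(2 + b)) *
          (pdR j w x * ((p x * p x + q x * q x) * (p x * p x + q x * q x))))
      + lam * ∫ x, (‖x‖ ^ (-b) *
          (lapR w x * ((p x * p x + q x * q x) * (p x * p x + q x * q x)))) := by
  have hL : (lapR w).HasTemperateGrowth := temp_sum fun j => temp_pdR (hW j) j
  have hLL : (lapR (lapR w)).HasTemperateGrowth :=
    temp_sum fun j => temp_pdR (temp_pdR hL j) j
  have sρ : Sch (fun x => p x * p x + q x * q x) := (hp.mul hp).add (hq.mul hq)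
  have sρ2 := sρ.mul sρ
  have sρ' : ∀ k, Sch (fun x => (pdR k p x * p x + p x * pdR k p x)
      + (pdR k q x * q x + q x * pdR k q x)) := fun k =>
    (((hp.pdR k).mul hp).add (hp.mul (hp.pdR k))).add
      (((hq.pdR k).mul hq).add (hq.mul (hq.pdR k)))
  have oρ : OrdZ 2 (fun x => p x * p x + q x * q x) := (op.mul op).add (oq.mul oq)
  have oρa : a ≠ 0 → OrdZ 4 (fun x => p x * p x + q x * q x) := fun ha =>
    ((op2 ha).mul (op2 ha)).add ((oq2 ha).mul (oq2 ha))
  have oρ2 : OrdZ 4 (fun x => (p x * p x + q x * q x) * (p x * p x + q x * q x)) := oρ.mul oρ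
  have pk := fun k => OrdZ.temp (hp.pdR k).temp
  have qk := fun k => OrdZ.temp (hq.pdR k).temp
  have oρ' : ∀ k, OrdZ 1 (fun x => (pdR k p x * p x + p x * pdR k p x)
      + (pdR k q x * q x + q x * pdR k q x)) := fun k =>
    (((pk k).mul op).add (op.mul (pk k))).add
      (((qk k).mul oq).add (oq.mul (qk k)))
  have oρ'a : a ≠ 0 → ∀ k, OrdZ 2 (fun x => (pdR k p x * p x + p x * pdR k p x)
      + (pdR k q x * q x + q x * pdR k q x)) := fun ha k =>
    (((pk k).mul (op2 ha)).add ((op2 ha).mul (pk k))).add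
      (((qk k).mul (oq2 ha)).add ((oq2 ha).mul (qk k)))
  have oW := fun k => OrdZ.temp (hW k)
  have oWW := fun k => OrdZ.temp (temp_pdR (hW k) k)
  -- the integrability facts
  have I1 : ∀ k, Integrable (fun x : E3 => a * (x k / ‖x‖ ^ 4) *
      (pdR k w x * (p x * p x + q x * q x))) := fun k =>
    int1 a k (Sch.tmul (hW k) sρ) fun ha => ((oW k).mul (oρa ha)).mono (by norm_num)
  have I0 : ∀ k, Integrable (fun x : E3 => a / ‖x‖ ^ 2 *
      (pdR k w x * (p x * p x + q x * q x))) := fun k =>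
    int2 a (Sch.tmul (hW k) sρ) fun ha => ((oW k).mul (oρa ha)).mono (by norm_num)
  have I2 : ∀ k, Integrable (fun x : E3 => a / ‖x‖ ^ 2 *
      (pdR k (pdR k w) x * (p x * p x + q x * q x)
    + pdR k w x * ((pdR k p x * p x + p x * pdR k p x)
      + (pdR k q x * q x + q x * pdR k q x)))) := fun k =>
    int2 a ((Sch.tmul (temp_pdR (hW k) k) sρ).add (Sch.tmul (hW k) (sρ' k))) fun ha =>
      (((oWW k).mul (oρa ha)).mono (by norm_num)).add
        (((oW k).mul (oρ'a ha k)).mono (by norm_num))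
  have J1 : ∀ k, Integrable (fun x : E3 => x k * ‖x‖ ^ (-(2 + b)) *
      (pdR k w x * ((p x * p x + q x * q x) * (p x * p x + q x * q x)))) := fun k =>
    int3 hb0 hb1 k (Sch.tmul (hW k) sρ2) (((oW k).mul oρ2).mono (by norm_num))
  have J0 : ∀ k, Integrable (fun x : E3 => ‖x‖ ^ (-b) *
      (pdR k w x * ((p x * p x + q x * q x) * (p x * p x + q x * q x)))) := fun k =>
    int4 hb0 hb1 (Sch.tmul (hW k) sρ2) (((oW k).mul oρ2).mono (by norm_num))
  have J2 : ∀ k, Integrable (fun x : E3 => ‖x‖ ^ (-b) *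
      (pdR k (pdR k w) x * ((p x * p x + q x * q x) * (p x * p x + q x * q x))
    + pdR k w x * (((pdR k p x * p x + p x * pdR k p x)
      + (pdR k q x * q x + q x * pdR k q x)) * (p x * p x + q x * q x)
      + (p x * p x + q x * q x) * ((pdR k p x * p x + p x * pdR k p x)
      + (pdR k q x * q x + q x * pdR k q x))))) := fun k =>
    int4 hb0 hb1 ((Sch.tmul (temp_pdR (hW k) k) sρ2).add
      (Sch.tmul (hW k) (((sρ' k).mul sρ).add (sρ.mul (sρ' k)))))
      ((((oWW k).mul oρ2).mono (by norm_num)).add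
        (((oW k).mul (((oρ' k).mul oρ).add (oρ.mul (oρ' k)))).mono (by norm_num)))
  have J3 : Integrable (fun x : E3 => ‖x‖ ^ (-b) *
      (lapR w x * ((p x * p x + q x * q x) * (p x * p x + q x * q x)))) :=
    int4 hb0 hb1 (Sch.tmul hL sρ2) (((OrdZ.temp hL).mul oρ2).mono (by norm_num))
  have IS' : ∀ k, Integrable (fluxSing' a b lam w p q k) := fun k =>
    ((((I1 k).const_mul (-2)).add (I2 k)).const_mul 2).add
      ((((J1 k).const_mul (-b)).add (J2 k)).const_mul lam)
  -- singular flux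
  have IS0 : ∀ k, Integrable (fun x : E3 => 2 * (a / ‖x‖ ^ 2 *
      (pdR k w x * (p x * p x + q x * q x))) + lam * (‖x‖ ^ (-b) *
      (pdR k w x * ((p x * p x + q x * q x) * (p x * p x + q x * q x))))) := fun k =>
    ((I0 k).const_mul 2).add ((J0 k).const_mul lam)
  have hDD : ∀ k x, DD k (fun x : E3 => 2 * (a / ‖x‖ ^ 2 *
      (pdR k w x * (p x * p x + q x * q x))) + lam * (‖x‖ ^ (-b) *
      (pdR k w x * ((p x * p x + q x * q x) * (p x * p x + q x * q x)))))
      (fluxSing' a b lam w p q k x) x := by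
    intro k x
    rcases eq_or_ne x 0 with rfl | hx
    · have hz : fluxSing' a b lam w p q k 0 = 0 := by
        simp [fluxSing', Real.zero_rpow (neg_ne_zero.2 hb0.ne')]
      rw [hz]
      have A1 : DD k (fun x : E3 => a / ‖x‖ ^ 2 *
          (pdR k w x * (p x * p x + q x * q x))) 0 0 := by
        rcases eq_or_ne a 0 with rfl | ha
        · exact DD_zero_of_bound (C := 0) (fun x _ => by simp)
        · obtain ⟨D, -, h⟩ := OrdZ.ker (m := 2) (n := 2) (fun x _ => k2_a a x)
            (((oW k).mul (oρa ha)).mono (by norm_num))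
          exact DD_zero_of_bound h
      have A2 : DD k (fun x : E3 => ‖x‖ ^ (-b) *
          (pdR k w x * ((p x * p x + q x * q x) * (p x * p x + q x * q x)))) 0 0 := by
        obtain ⟨D, -, h⟩ := OrdZ.ker (m := 1) (n := 2) (fun x h => k4_a hb1 x h)
            (((oW k).mul oρ2).mono (by norm_num))
        exact DD_zero_of_bound h
      simpa using (A1.const_mul 2).add (A2.const_mul lam)
    · have P := hp.DD k x
      have Q := hq.DD k x
      have R := (P.mul P).add (Q.mul Q)
      have W' := DD_temp (hW k) k x
      have T := ((((DD_inv_sq a k hx).mul (W'.mul R)).const_mul 2).add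
        (((DD_rpow b k hx).mul (W'.mul (R.mul R))).const_mul lam))
      convert! T using 1
      unfold fluxSing'
      ring
  have Z1 : ∀ k, ∫ x, pdR k (fluxS w p q r s k) x = 0 := fun k =>
    integral_DD_zero (fluxS_sch hW hp hq hr hs k).integrable
      ((fluxS_sch hW hp hq hr hs k).pdR k).integrable
      (fun x => (fluxS_sch hW hp hq hr hs k).DD k x)
  have Z2 : ∀ k, ∫ x, fluxSing' a b lam w p q k x = 0 := fun k =>
    integral_DD_zero (IS0 k) (IS' k) (hDD k)
  have Z : ∫ x, ∑ k, (pdR k (fluxS w p q r s k) x + fluxSing' a b lam w p q k x) = 0 := by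
    have hint : ∀ k ∈ Finset.univ, Integrable (fun x =>
        pdR k (fluxS w p q r s k) x + fluxSing' a b lam w p q k x) := fun k _ =>
      ((fluxS_sch hW hp hq hr hs k).pdR k).integrable.add (IS' k)
    rw [integral_finsetSum _ hint]
    refine Finset.sum_eq_zero fun k _ => ?_
    rw [integral_add ((fluxS_sch hW hp hq hr hs k).pdR k).integrable (IS' k), Z1, Z2, add_zero]
  have iL : Integrable (fun x => 2 * (∑ j, pdR j w x * ((r x * pdR j q x - s x * pdR j p x)
        + (p x * pdR j s x - q x * pdR j r x)))) :=
    (Sch.const_mul 2 (Sch.sum fun j => Sch.tmul (hW j)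
      (((hr.mul (hq.pdR j)).sub (hs.mul (hp.pdR j))).add
        ((hp.mul (hs.pdR j)).sub (hq.mul (hr.pdR j)))))).integrable
  have sR : Sch (fun x => (-1) * (lapR (lapR w) x * (p x * p x + q x * q x))
          + 4 * ∑ j : Fin 3, ∑ k : Fin 3,
              pdR2 j k w x * (pdR j p x * pdR k p x + pdR j q x * pdR k q x)) :=
    (Sch.const_mul (-1) (Sch.tmul hLL sρ)).add (Sch.const_mul 4 (Sch.sum fun j => Sch.sum fun k =>
      Sch.tmul (temp_pdR (hW k) j)
        (((hp.pdR j).mul (hp.pdR k)).add ((hq.pdR j).mul (hq.pdR k)))))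
  have iR1 : Integrable (fun x => ((-(lapR (lapR w) x)) * (p x * p x + q x * q x)
          + 4 * ∑ j : Fin 3, ∑ k : Fin 3,
              pdR2 j k w x * (pdR j p x * pdR k p x + pdR j q x * pdR k q x)
          + 4 * ∑ j : Fin 3, a * (x j / ‖x‖ ^ 4) * (pdR j w x * (p x * p x + q x * q x)))) := by
    have := sR.integrable.add
      ((integrable_finsetSum Finset.univ (fun j _ => I1 j)).const_mul 4)
    refine this.congr (ae_of_all _ fun x => ?_)
    simp only [Pi.add_apply]
    ring
  have iR2 := integrable_finsetSum Finset.univ (fun j _ => J1 j)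
  refine int_lin iL iR1 iR2 J3 Z ?_
  filter_upwards [ae_ne_zero] with x hx
  exact pointwise hW hp hq hr hs x (e1 x hx) (e2 x hx)
lemma zero_of_bound {f : E3 → ℝ} (hf : Continuous f) {C β : ℝ} (hβ : 0 < β)
    (h : ∀ x : E3, x ≠ 0 → ‖x‖ ≤ 1 → |f x| ≤ C * ‖x‖ ^ β) : f 0 = 0 := by
  have h1 : Tendsto f (𝓝[≠] 0) (𝓝 (f 0)) := hf.continuousAt.tendsto.mono_left nhdsWithin_le_nhds
  have h2 : Tendsto (fun x : E3 => C * ‖x‖ ^ β) (𝓝[≠] 0) (𝓝 0) := by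
    have : Continuous (fun x : E3 => C * ‖x‖ ^ β) :=
      continuous_const.mul (continuous_norm.rpow_const fun _ => Or.inr hβ.le)
    have := this.continuousAt (x := 0)
    unfold ContinuousAt at this
    simp only [norm_zero, Real.zero_rpow hβ.ne', mul_zero] at this
    exact this.mono_left nhdsWithin_le_nhds
  have h3 : Tendsto f (𝓝[≠] 0) (𝓝 0) := by
    refine squeeze_zero_norm' ?_ h2
    have hb : Metric.closedBall (0 : E3) 1 ∈ 𝓝[≠] (0:E3) :=
      nhdsWithin_le_nhds (Metric.closedBall_mem_nhds _ one_pos)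
    filter_upwards [hb, self_mem_nhdsWithin] with x hx hx0
    exact h x hx0 (by simpa using hx)
  exact tendsto_nhds_unique h1 h3

lemma OrdZ.one {f : E3 → ℝ} (hf : f.HasTemperateGrowth) (h0 : f 0 = 0) : OrdZ 1 f := by
  obtain ⟨C, hC⟩ := (isCompact_closedBall (0:E3) 1).exists_bound_of_continuousOn
    (f := fderiv ℝ f) (hf.1.continuous_fderiv (by simp)).continuousOn
  refine ⟨C, (norm_nonneg _).trans (hC 0 (by simp)), fun x hx => ?_⟩
  have := (convex_closedBall (0:E3) 1).norm_image_sub_le_of_norm_fderiv_le (𝕜 := ℝ)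
    (fun y _ => (hf.1.differentiable (by simp)) y) hC (x := 0) (y := x) (by simp) (by simpa using hx)
  simpa [h0] using this

lemma orders {a b lam : ℝ} (hb0 : 0 < b) (hb1 : b < 1) (hlam : lam = 1 ∨ lam = -1)
    {p q r s : E3 → ℝ}
    (hp : Sch p) (hq : Sch q) (hr : Sch r) (hs : Sch s)
    (e1 : ∀ x : E3, x ≠ 0 → - s x + lapR p x - a / ‖x‖ ^ 2 * p x =
      lam * ‖x‖ ^ (-b) * (p x * p x + q x * q x) * p x)
    (e2 : ∀ x : E3, x ≠ 0 → r x + lapR q x - a / ‖x‖ ^ 2 * q x =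
      lam * ‖x‖ ^ (-b) * (p x * p x + q x * q x) * q x) :
    OrdZ 1 p ∧ OrdZ 1 q ∧ (a ≠ 0 → OrdZ 2 p) ∧ (a ≠ 0 → OrdZ 2 q) := by
  have hlap : |lam| = 1 := by rcases hlam with h | h <;> simp [h]
  have sX : Sch (fun x => lapR p x - s x) := (Sch.sum fun j => (hp.pdR j).pdR j).sub hs
  have sY : Sch (fun x => r x + lapR q x) := hr.add (Sch.sum fun j => (hq.pdR j).pdR j)
  have sρ : Sch (fun x => p x * p x + q x * q x) := (hp.mul hp).add (hq.mul hq)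
  obtain ⟨K, hK, hKb⟩ := temp_bdd ((sX.mul hp).add (sY.mul hq)).temp
  obtain ⟨M, hM, hMb⟩ := temp_bdd (sρ.mul sρ).temp
  have key : ∀ x : E3, x ≠ 0 → a / ‖x‖ ^ 2 * (p x * p x + q x * q x)
      + lam * ‖x‖ ^ (-b) * ((p x * p x + q x * q x) * (p x * p x + q x * q x)) =
      (lapR p x - s x) * p x + (r x + lapR q x) * q x := by
    intro x hx
    linear_combination (-p x) * e1 x hx - q x * e2 x hx
  have hρ0 : p 0 * p 0 + q 0 * q 0 = 0 := by
    rcases eq_or_ne a 0 with rfl | ha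
    · have : (p 0 * p 0 + q 0 * q 0) * (p 0 * p 0 + q 0 * q 0) = 0 := by
        refine zero_of_bound (f := fun x => (p x * p x + q x * q x) * (p x * p x + q x * q x))
          (sρ.mul sρ).temp.1.continuous (C := K) hb0 ?_
        intro x hx hx1
        have hx' : 0 < ‖x‖ := by simpa using hx
        have k1 := key x hx
        have k2 := hKb x hx1
        simp only [← k1, zero_div, zero_mul, zero_add, abs_mul, hlap, one_mul] at k2
        rw [abs_of_pos (Real.rpow_pos_of_pos hx' _), Real.rpow_neg hx'.le, ← abs_mul] at k2
        rw [inv_mul_le_iff₀ (Real.rpow_pos_of_pos hx' _)] at k2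
        simp only [abs_mul] at k2 ⊢
        linarith
      simpa using this
    · have : a * (p 0 * p 0 + q 0 * q 0) = 0 := by
        refine zero_of_bound (f := fun x => a * (p x * p x + q x * q x))
          (sρ.const_mul a).temp.1.continuous (C := K + M) one_pos ?_
        intro x hx hx1
        have hx' : 0 < ‖x‖ := by simpa using hx
        have k1 := key x hx
        have k2 := hKb x hx1
        have k3 := hMb x hx1
        have k4 := k4_a hb1 x hx1
        have e : a * (p x * p x + q x * q x) =
          ‖x‖ ^ 2 * ((lapR p x - s x) * p x + (r x + lapR q x) * q x)
          - lam * ((‖x‖ ^ (-b) * ‖x‖ ^ 1) * ‖x‖ *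
            ((p x * p x + q x * q x) * (p x * p x + q x * q x))) := by
          rw [← k1]; field_simp; ring
        simp only [e, Real.rpow_one]
        refine (abs_sub _ _).trans ?_
        rw [abs_mul, abs_mul lam, abs_mul (_ * _ * _), abs_mul (_ * _) ‖x‖, abs_mul (‖x‖ ^ (-b)),
          hlap, abs_of_pos (pow_pos hx' 2), abs_of_pos (pow_pos hx' 1), abs_of_pos hx', one_mul]
        have a1 : ‖x‖ ^ 2 * |(lapR p x - s x) * p x + (r x + lapR q x) * q x| ≤ ‖x‖ * K :=
          mul_le_mul (by nlinarith) k2 (abs_nonneg _) hx'.le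
        have a2 : |‖x‖ ^ (-b)| * ‖x‖ ^ 1 * ‖x‖ *
            |(p x * p x + q x * q x) * (p x * p x + q x * q x)| ≤ (1 * ‖x‖) * M :=
          mul_le_mul (mul_le_mul_of_nonneg_right k4 hx'.le) k3 (abs_nonneg _) (by positivity)
        linarith
      simpa [ha] using this
  have hp0 : p 0 = 0 := by nlinarith [mul_self_nonneg (p 0), mul_self_nonneg (q 0)]
  have hq0 : q 0 = 0 := by nlinarith [mul_self_nonneg (p 0), mul_self_nonneg (q 0)]
  have op := OrdZ.one hp.temp hp0
  have oq := OrdZ.one hq.temp hq0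
  have oρ : OrdZ 2 (fun x => p x * p x + q x * q x) := (op.mul op).add (oq.mul oq)
  have gen : a ≠ 0 → ∀ {f X : E3 → ℝ}, f 0 = 0 → OrdZ 1 f → Sch X →
      (∀ x : E3, x ≠ 0 → X x - a / ‖x‖ ^ 2 * f x =
      lam * ‖x‖ ^ (-b) * (p x * p x + q x * q x) * f x) → OrdZ 2 f := by
    intro ha f X hf0 of sX e
    obtain ⟨D, hD, h⟩ := OrdZ.ker (m := 1) (n := 2) (fun x h => k4_a hb1 x h) (oρ.mul of)
    obtain ⟨N, hN, hNb⟩ := temp_bdd sX.temp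
    refine ⟨|a|⁻¹ * (N + D), by positivity, fun x hx => ?_⟩
    rcases eq_or_ne x 0 with rfl | hx0
    · simp [hf0]
    have hx' : 0 < ‖x‖ := by simpa using hx0
    have e' : a * f x = ‖x‖ ^ 2 * (X x
        - lam * (‖x‖ ^ (-b) * ((p x * p x + q x * q x) * f x))) := by
      have := e x hx0
      have h' : a / ‖x‖ ^ 2 * f x = X x
        - lam * (‖x‖ ^ (-b) * ((p x * p x + q x * q x) * f x)) := by linear_combination -this
      rw [← h']; field_simp
    have h1 : |a| * |f x| ≤ ‖x‖ ^ 2 * (N + D) := by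
      rw [← abs_mul, e', abs_mul, abs_of_pos (pow_pos hx' 2)]
      refine mul_le_mul_of_nonneg_left ((abs_sub _ _).trans ?_) (by positivity)
      rw [abs_mul lam, hlap, one_mul]
      refine add_le_add (hNb x hx) ((h x hx).trans ?_)
      exact mul_le_of_le_one_right hD (pow_le_one₀ hx'.le hx)
    have ha' : 0 < |a| := abs_pos.2 ha
    rw [mul_assoc, ← div_eq_inv_mul, le_div_iff₀ ha']
    linarith
  refine ⟨op, oq, fun ha => gen ha hp0 op sX fun x hx => ?_, fun ha => gen ha hq0 oq sY e2⟩
  rw [← e1 x hx]; ring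

lemma pd_re {f : E3 → ℂ} (hf : ContDiff ℝ (⊤ : ℕ∞) f) (j : Fin 3) (x : E3) :
    (pd j f x).re = pdR j (fun y => (f y).re) x := by
  have := (Complex.reCLM.hasFDerivAt.comp x ((hf.differentiable (by simp)) x).hasFDerivAt).fderiv
  unfold pd pdR
  rw [show (fun y => (f y).re) = Complex.reCLM ∘ f from rfl, this]
  simp

lemma pd_im {f : E3 → ℂ} (hf : ContDiff ℝ (⊤ : ℕ∞) f) (j : Fin 3) (x : E3) :
    (pd j f x).im = pdR j (fun y => (f y).im) x := by
  have := (Complex.imCLM.hasFDerivAt.comp x ((hf.differentiable (by simp)) x).hasFDerivAt).fderiv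
  unfold pd pdR
  rw [show (fun y => (f y).im) = Complex.imCLM ∘ f from rfl, this]
  simp

lemma pd_contDiff {f : E3 → ℂ} (hf : ContDiff ℝ (⊤ : ℕ∞) f) (j : Fin 3) :
    ContDiff ℝ (⊤ : ℕ∞) (pd j f) :=
  (hf.fderiv_right (m := (⊤ : ℕ∞)) (by simp)).clm_apply contDiff_const

lemma lap_re {f : E3 → ℂ} (hf : ContDiff ℝ (⊤ : ℕ∞) f) (x : E3) :
    (lap f x).re = lapR (fun y => (f y).re) x := by
  unfold lap lapR
  rw [Complex.re_sum]
  refine Finset.sum_congr rfl fun j _ => ?_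
  rw [pd_re (pd_contDiff hf j)]
  simp only [pd_re hf]

lemma lap_im {f : E3 → ℂ} (hf : ContDiff ℝ (⊤ : ℕ∞) f) (x : E3) :
    (lap f x).im = lapR (fun y => (f y).im) x := by
  unfold lap lapR
  rw [Complex.im_sum]
  refine Finset.sum_congr rfl fun j _ => ?_
  rw [pd_im (pd_contDiff hf j)]
  simp only [pd_im hf]

lemma sch_re {f : E3 → ℂ} (h : ∃ g : SchwartzMap E3 ℂ, ∀ x, g x = f x) :
    Sch (fun x => (f x).re) := by
  obtain ⟨g, hg⟩ := h
  exact ⟨SchwartzMap.postcompCLM Complex.reCLM g, fun x => by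
    simp [← hg]⟩

lemma sch_im {f : E3 → ℂ} (h : ∃ g : SchwartzMap E3 ℂ, ∀ x, g x = f x) :
    Sch (fun x => (f x).im) := by
  obtain ⟨g, hg⟩ := h
  exact ⟨SchwartzMap.postcompCLM Complex.imCLM g, fun x => by
    simp [← hg]⟩

lemma schC_contDiff {f : E3 → ℂ} (h : ∃ g : SchwartzMap E3 ℂ, ∀ x, g x = f x) :
    ContDiff ℝ (⊤ : ℕ∞) f := by
  obtain ⟨g, hg⟩ := h
  rw [show f = g from funext fun x => (hg x).symm]
  exact g.smooth ⊤

lemma norm_pd_le (j : Fin 3) (f : E3 → ℂ) (x : E3) : ‖pd j f x‖ ≤ ‖fderiv ℝ f x‖ := by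
  refine (ContinuousLinearMap.le_opNorm _ _).trans ?_
  simp [e3]

lemma norm_pdR_le (j : Fin 3) (f : E3 → ℝ) (x : E3) : |pdR j f x| ≤ ‖fderiv ℝ f x‖ := by
  refine (ContinuousLinearMap.le_opNorm (fderiv ℝ f x) (e3 j)).trans ?_
  simp [e3]

lemma hasDerivAt_time {u : ℝ → E3 → ℂ} (hu : ContDiff ℝ (⊤ : ℕ∞) (Function.uncurry u))
    (s : ℝ) (x : E3) :
    HasDerivAt (fun s => u s x) (fderiv ℝ (Function.uncurry u) (s, x) (1, 0)) s := by
  have h1 : HasDerivAt (fun s : ℝ => (s, x)) ((1:ℝ), (0:E3)) s :=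
    (hasDerivAt_id s).prodMk (hasDerivAt_const s x)
  exact ((hu.differentiable (by simp)) (s, x)).hasFDerivAt.comp_hasDerivAt s h1

set_option maxHeartbeats 1000000 in
lemma hasDerivAt_pd {u : ℝ → E3 → ℂ} (hu : ContDiff ℝ (⊤ : ℕ∞) (Function.uncurry u))
    (s : ℝ) (x : E3) (j : Fin 3) :
    HasDerivAt (fun s => pd j (u s) x) (pd j (fun y => deriv (fun s => u s y) s) x) s := by
  set U := Function.uncurry u with hU
  have hsym : IsSymmSndFDerivAt ℝ U (s, x) :=
    (hu.contDiffAt).isSymmSndFDerivAt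
      (by simp; exact WithTop.coe_le_coe.2 (le_top : (2:ℕ∞) ≤ ⊤))
  have hd : HasFDerivAt (fderiv ℝ U) (fderiv ℝ (fderiv ℝ U) (s, x)) (s, x) :=
    (((hu.fderiv_right (m := 1) (by norm_cast)).differentiable (by simp)) (s, x)).hasFDerivAt
  have hx : ∀ (s : ℝ) (x : E3), HasFDerivAt (fun y : E3 => (s, y))
      (ContinuousLinearMap.inr ℝ ℝ E3) x := fun s x => hasFDerivAt_prodMk_right s x
  have h1 : ∀ s, pd j (u s) x = fderiv ℝ U (s, x) (0, e3 j) := by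
    intro s
    have := (((hu.differentiable (by simp)) (s, x)).hasFDerivAt.comp x (hx s x)).fderiv
    unfold pd
    rw [show u s = U ∘ (fun y : E3 => (s, y)) from rfl, this]
    simp
  have h2 : pd j (fun y => deriv (fun s => u s y) s) x =
      fderiv ℝ (fderiv ℝ U) (s, x) (0, e3 j) (1, 0) := by
    have e : (fun y => deriv (fun s => u s y) s) =
        (fun y => (fderiv ℝ U ∘ (fun y : E3 => (s, y))) y ((1:ℝ), (0:E3))) :=
      funext fun y => (hasDerivAt_time hu s y).deriv
    have h3 := (hd.comp x (hx s x)).clm_apply (hasFDerivAt_const ((1:ℝ), (0:E3)) x)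
    unfold pd
    rw [e, h3.fderiv]
    simp
  simp only [h1]
  rw [h2, hsym.eq]
  have h4 : HasDerivAt (fun s : ℝ => (s, x)) ((1:ℝ), (0:E3)) s :=
    (hasDerivAt_id s).prodMk (hasDerivAt_const s x)
  have h5 := (hd.comp_hasDerivAt s h4).clm_apply (hasDerivAt_const s ((0:ℝ), e3 j))
  simpa using! h5
lemma decay {a b lam : ℝ} {u : ℝ → E3 → ℂ} (hu : IsSchwartzSolution a b lam u)
    (T : ℝ) (hT : 0 < T) (k n : ℕ) : ∃ C : ℝ, 0 ≤ C ∧ ∀ s ∈ Set.Icc (-T) T, ∀ x : E3,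
      (1 + ‖x‖) ^ k * ‖iteratedFDeriv ℝ n (u s) x‖ ≤ C ∧
      (1 + ‖x‖) ^ k * ‖iteratedFDeriv ℝ n (fun y => deriv (fun s => u s y) s) x‖ ≤ C := by
  obtain ⟨A, hA⟩ := hu.unif_bound 0 n T hT
  obtain ⟨B, hB⟩ := hu.unif_bound k n T hT
  have main : ∀ s ∈ Set.Icc (-T) T, ∀ x : E3,
      (1 + ‖x‖) ^ k * ‖iteratedFDeriv ℝ n (u s) x‖ ≤ 2 ^ (k-1) * (A + B) ∧
      (1 + ‖x‖) ^ k * ‖iteratedFDeriv ℝ n (fun y => deriv (fun s => u s y) s) x‖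
        ≤ 2 ^ (k-1) * (A + B) := by
    intro s hs x
    have h1 := hA s hs x
    have h2 := hB s hs x
    have h3 : (1 + ‖x‖) ^ k ≤ 2 ^ (k-1) * (1 ^ k + ‖x‖ ^ k) :=
      add_pow_le zero_le_one (norm_nonneg _) k
    simp only [pow_zero, one_mul] at h1
    rw [one_pow] at h3
    have n1 := norm_nonneg (iteratedFDeriv ℝ n (u s) x)
    have n2 := norm_nonneg (iteratedFDeriv ℝ n (fun y => deriv (fun s => u s y) s) x)
    have n3 : 0 ≤ ‖x‖ ^ k := by positivity
    have m1 := mul_nonneg n3 n1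
    have m2 := mul_nonneg n3 n2
    constructor
    · refine (mul_le_mul_of_nonneg_right h3 n1).trans ?_
      rw [mul_assoc]
      exact mul_le_mul_of_nonneg_left (by linarith) (by positivity)
    · refine (mul_le_mul_of_nonneg_right h3 n2).trans ?_
      rw [mul_assoc]
      exact mul_le_mul_of_nonneg_left (by linarith) (by positivity)
  refine ⟨2 ^ (k-1) * (A + B), ?_, main⟩
  exact le_trans (by positivity) (main 0 ⟨by linarith, by linarith⟩ 0).1

lemma integrable_weight (c : ℝ) : Integrable (fun x : E3 => c * ((1 + ‖x‖) ^ 4)⁻¹) := by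
  have h := integrable_one_add_norm (E := E3) (μ := volume) (r := 4) (by simp; norm_num)
  refine (h.congr (ae_of_all _ fun x => ?_)).const_mul c
  simp only []
  rw [Real.rpow_neg (by positivity)]
  norm_cast

/-- A bound for `f · ∑ wⱼ ∂ⱼ g`. -/
lemma term_bound {w : E3 → ℝ} {C A B : ℝ} {m : ℕ} {x : E3} (hA : 0 ≤ A)
    (hC : ‖fderiv ℝ w x‖ ≤ C * (1 + ‖x‖) ^ m) {z : ℂ} {g : E3 → ℂ} (hz : ‖z‖ ≤ A)
    (hg : (1 + ‖x‖) ^ (m + 4) * ‖fderiv ℝ g x‖ ≤ B) :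
    ‖z * ∑ j : Fin 3, ((pdR j w x : ℝ) : ℂ) * pd j g x‖ ≤
      3 * A * |C| * B * ((1 + ‖x‖) ^ 4)⁻¹ := by
  have hx : 0 < 1 + ‖x‖ := by positivity
  have h1 : ∀ j : Fin 3, ‖((pdR j w x : ℝ) : ℂ) * pd j g x‖ ≤
      |C| * B * ((1 + ‖x‖) ^ 4)⁻¹ := by
    intro j
    rw [norm_mul, Complex.norm_real, Real.norm_eq_abs]
    have hC' : |pdR j w x| ≤ |C| * (1 + ‖x‖) ^ m :=
      ((norm_pdR_le j w x).trans hC).trans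
        (mul_le_mul_of_nonneg_right (le_abs_self C) (by positivity))
    have hg' : ‖pd j g x‖ ≤ B * ((1 + ‖x‖) ^ (m + 4))⁻¹ := by
      refine (norm_pd_le j g x).trans ?_
      rw [← div_eq_mul_inv, le_div_iff₀ (by positivity)]
      linarith
    refine (mul_le_mul hC' hg' (norm_nonneg _) (by positivity)).trans (le_of_eq ?_)
    rw [pow_add]
    field_simp
  rw [norm_mul]
  have h2 : ‖∑ j : Fin 3, ((pdR j w x : ℝ) : ℂ) * pd j g x‖ ≤
      3 * (|C| * B * ((1 + ‖x‖) ^ 4)⁻¹) := by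
    refine (norm_sum_le _ _).trans ((Finset.sum_le_sum fun j _ => h1 j).trans ?_)
    simp
  refine (mul_le_mul hz h2 (norm_nonneg _) hA).trans (le_of_eq ?_)
  ring

lemma time_deriv {a b lam : ℝ} {u : ℝ → E3 → ℂ} (hu : IsSchwartzSolution a b lam u)
    {w : E3 → ℝ} (hw : ContDiff ℝ (⊤ : ℕ∞) w)
    (hwpoly : ∀ n : ℕ, 1 ≤ n → ∃ C : ℝ, ∃ m : ℕ, ∀ x : E3,
        ‖iteratedFDeriv ℝ n w x‖ ≤ C * (1 + ‖x‖) ^ m)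
    (t : ℝ) :
    Integrable (fun x => (starRingEnd ℂ) (deriv (fun s => u s x) t)
          * ∑ j : Fin 3, ((pdR j w x : ℝ) : ℂ) * pd j (u t) x
        + (starRingEnd ℂ) (u t x) * ∑ j : Fin 3, ((pdR j w x : ℝ) : ℂ)
          * pd j (fun y => deriv (fun s => u s y) t) x) ∧
    HasDerivAt (fun s => ∫ x : E3, (starRingEnd ℂ) (u s x)
          * ∑ j : Fin 3, ((pdR j w x : ℝ) : ℂ) * pd j (u s) x)
      (∫ x : E3, ((starRingEnd ℂ) (deriv (fun s => u s x) t)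
          * ∑ j : Fin 3, ((pdR j w x : ℝ) : ℂ) * pd j (u t) x
        + (starRingEnd ℂ) (u t x) * ∑ j : Fin 3, ((pdR j w x : ℝ) : ℂ)
          * pd j (fun y => deriv (fun s => u s y) t) x)) t := by
  have hT : 0 < |t| + 1 := by positivity
  obtain ⟨C, m, hC⟩ := hwpoly 1 le_rfl
  simp only [norm_iteratedFDeriv_one] at hC
  obtain ⟨A, hA, hAb⟩ := decay hu (|t| + 1) hT 0 0
  obtain ⟨B, hB, hBb⟩ := decay hu (|t| + 1) hT (m + 4) 1
  simp only [norm_iteratedFDeriv_one, norm_iteratedFDeriv_zero, pow_zero, one_mul] at hAb hBb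
  have ht : Metric.ball t 1 ⊆ Set.Icc (-(|t| + 1)) (|t| + 1) := by
    intro s hs
    rw [Metric.mem_ball, Real.dist_eq, abs_lt] at hs
    have := neg_abs_le t
    have := le_abs_self t
    constructor <;> linarith
  have htt := ht (Metric.mem_ball_self one_pos)
  have cw : ∀ j, Continuous (fun x => ((pdR j w x : ℝ) : ℂ)) := fun j =>
    Complex.continuous_ofReal.comp (temp_pdR_w hw hwpoly j).1.continuous
  have cu : ∀ s, Continuous (fun x => (starRingEnd ℂ) (u s x)) := fun s =>
    Complex.continuous_conj.comp (schC_contDiff (hu.schwartz s)).continuous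
  have cut : ∀ s, Continuous (fun x => (starRingEnd ℂ) (deriv (fun s => u s x) s)) := fun s =>
    Complex.continuous_conj.comp (schC_contDiff (hu.schwartz_dt s)).continuous
  have cs : ∀ {f : E3 → ℂ}, ContDiff ℝ (⊤ : ℕ∞) f →
      Continuous (fun x => ∑ j : Fin 3, ((pdR j w x : ℝ) : ℂ) * pd j f x) := fun hf =>
    continuous_finsetSum _ fun j _ => (cw j).mul (pd_contDiff hf j).continuous
  have cF : ∀ s, Continuous (fun x => (starRingEnd ℂ) (u s x)
          * ∑ j : Fin 3, ((pdR j w x : ℝ) : ℂ) * pd j (u s) x) := fun s =>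
    (cu s).mul (cs (schC_contDiff (hu.schwartz s)))
  have cF' := ((cut t).mul (cs (schC_contDiff (hu.schwartz t)))).add
    ((cu t).mul (cs (schC_contDiff (hu.schwartz_dt t))))
  refine hasDerivAt_integral_of_dominated_loc_of_deriv_le (𝕜 := ℝ)
    (F := fun s x => (starRingEnd ℂ) (u s x)
          * ∑ j : Fin 3, ((pdR j w x : ℝ) : ℂ) * pd j (u s) x)
    (F' := fun s x => (starRingEnd ℂ) (deriv (fun s => u s x) s)
          * ∑ j : Fin 3, ((pdR j w x : ℝ) : ℂ) * pd j (u s) x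
        + (starRingEnd ℂ) (u s x) * ∑ j : Fin 3, ((pdR j w x : ℝ) : ℂ)
          * pd j (fun y => deriv (fun s => u s y) s) x)
    (s := Metric.ball t 1)
    (bound := fun x => 3 * A * |C| * B * ((1 + ‖x‖) ^ 4)⁻¹ +
      3 * A * |C| * B * ((1 + ‖x‖) ^ 4)⁻¹)
    (Metric.ball_mem_nhds t one_pos) ?_ ?_ ?_ ?_ ?_ ?_
  · exact Eventually.of_forall fun s => (cF s).aestronglyMeasurable
  · refine (integrable_weight (3 * A * |C| * B)).mono' (cF t).aestronglyMeasurable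
      (ae_of_all _ fun x => ?_)
    exact term_bound hA (hC x) (by simpa using (hAb t htt x).1) (hBb t htt x).1
  · exact cF'.aestronglyMeasurable
  · refine ae_of_all _ fun x s hs => (norm_add_le _ _).trans (add_le_add ?_ ?_)
    · exact term_bound hA (hC x) (by simpa using (hAb s (ht hs) x).2) (hBb s (ht hs) x).1
    · exact term_bound hA (hC x) (by simpa using (hAb s (ht hs) x).1) (hBb s (ht hs) x).2
  · exact (integrable_weight _).add (integrable_weight _)
  · refine ae_of_all _ fun x s _ => ?_
    have h1 := hasDerivAt_time hu.smooth s x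
    have h2 : HasDerivAt (fun s => (starRingEnd ℂ) (u s x))
        ((starRingEnd ℂ) (deriv (fun s => u s x) s)) s := by
      rw [← h1.deriv] at h1
      exact Complex.conjCLE.toContinuousLinearMap.hasFDerivAt.comp_hasDerivAt s h1
    have h3 : HasDerivAt (fun s => ∑ j : Fin 3, ((pdR j w x : ℝ) : ℂ) * pd j (u s) x)
        (∑ j : Fin 3, ((pdR j w x : ℝ) : ℂ) * pd j (fun y => deriv (fun s => u s y) s) x) s :=
      HasDerivAt.fun_sum fun j _ => (hasDerivAt_pd hu.smooth s x j).const_mul _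
    exact h2.mul h3

/-- **Virial identity for (INLS) with a general weight.** For a smooth Schwartz
solution `u` of (INLS) and a smooth weight `w` with polynomially bounded
derivatives of all orders `≥ 1`, with `V(t;w) = 2 Im ∫ conj(u) ∇w·∇u dx`,
`(d/dt)V(t;w) = ∫ [(−ΔΔw)|u|² + 4 ∂_j∂_k w Re(∂_j conj(u) ∂_k u)
  + 4a (x·∇w/|x|⁴)|u|²] + λb ∫ (x·∇w/|x|^{2+b})|u|⁴ + λ ∫ Δw |u|⁴/|x|^b`. -/
theorem virial_identity (a b lam : ℝ) (ha : -(1/4 : ℝ) < a)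
    (hb0 : 0 < b) (hb1 : b < 1) (hlam : lam = 1 ∨ lam = -1)
    (u : ℝ → E3 → ℂ) (hu : IsSchwartzSolution a b lam u)
    (w : E3 → ℝ) (hw : ContDiff ℝ (⊤ : ℕ∞) w)
    (hwpoly : ∀ n : ℕ, 1 ≤ n → ∃ C : ℝ, ∃ m : ℕ, ∀ x : E3,
        ‖iteratedFDeriv ℝ n w x‖ ≤ C * (1 + ‖x‖) ^ m)
    (t : ℝ) :
    HasDerivAt
      (fun s => 2 * (∫ x : E3, (starRingEnd ℂ) (u s x)
          * ∑ j : Fin 3, ((pdR j w x : ℝ) : ℂ) * pd j (u s) x).im)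
      ((∫ x : E3, ((-(lapR (lapR w) x)) * ‖u t x‖ ^ 2
          + 4 * ∑ j : Fin 3, ∑ k : Fin 3,
              pdR2 j k w x * ((starRingEnd ℂ) (pd j (u t) x) * pd k (u t) x).re
          + 4 * a * ((∑ j : Fin 3, x j * pdR j w x) / ‖x‖ ^ 4) * ‖u t x‖ ^ 2))
        + lam * b * (∫ x : E3,
            ((∑ j : Fin 3, x j * pdR j w x) * ‖x‖ ^ (-(2 + b))) * ‖u t x‖ ^ 4)
        + lam * ∫ x : E3, lapR w x * (‖u t x‖ ^ 4 * ‖x‖ ^ (-b))) t := by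
  obtain ⟨hint, hder⟩ := time_deriv hu hw hwpoly t
  have hcu := schC_contDiff (hu.schwartz t)
  have hcut := schC_contDiff (hu.schwartz_dt t)
  have hW := temp_pdR_w hw hwpoly
  have hp := sch_re (hu.schwartz t)
  have hq := sch_im (hu.schwartz t)
  have hr := sch_re (hu.schwartz_dt t)
  have hs := sch_im (hu.schwartz_dt t)
  have hn : ∀ x, ‖u t x‖ ^ 2 = (u t x).re * (u t x).re + (u t x).im * (u t x).im := fun x => by
    rw [Complex.sq_norm, Complex.normSq_apply]
  have hn4 : ∀ x, ‖u t x‖ ^ 4 = ((u t x).re * (u t x).re + (u t x).im * (u t x).im) *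
      ((u t x).re * (u t x).re + (u t x).im * (u t x).im) := fun x => by
    rw [← hn]; ring
  have e1 : ∀ x : E3, x ≠ 0 → - (deriv (fun s => u s x) t).im + lapR (fun x => (u t x).re) x
      - a / ‖x‖ ^ 2 * (u t x).re = lam * ‖x‖ ^ (-b) *
      ((u t x).re * (u t x).re + (u t x).im * (u t x).im) * (u t x).re := by
    intro x hx
    have h := congrArg Complex.re (hu.eqn t x hx)
    rw [hn, ← Complex.ofReal_mul, ← Complex.ofReal_mul, Complex.sub_re, Complex.add_re,
      Complex.re_ofReal_mul, Complex.re_ofReal_mul, lap_re hcu, Complex.I_mul_re] at h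
    exact h
  have e2 : ∀ x : E3, x ≠ 0 → (deriv (fun s => u s x) t).re + lapR (fun x => (u t x).im) x
      - a / ‖x‖ ^ 2 * (u t x).im = lam * ‖x‖ ^ (-b) *
      ((u t x).re * (u t x).re + (u t x).im * (u t x).im) * (u t x).im := by
    intro x hx
    have h := congrArg Complex.im (hu.eqn t x hx)
    rw [hn, ← Complex.ofReal_mul, ← Complex.ofReal_mul, Complex.sub_im, Complex.add_im,
      Complex.im_ofReal_mul, Complex.im_ofReal_mul, lap_im hcu, Complex.I_mul_im] at h
    exact h
  obtain ⟨o1, o2, o3, o4⟩ := orders hb0 hb1 hlam hp hq hr hs e1 e2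
  have hcore := core hb0 hb1 hW hp hq hr hs e1 e2 o1 o2 o3 o4
  have hd := (Complex.imCLM.hasFDerivAt.comp_hasDerivAt t hder).const_mul 2
  refine hd.congr_deriv ?_
  rw [← Complex.imCLM.integral_comp_comm hint, ← integral_const_mul]
  refine Eq.trans ?_ (hcore.trans ?_)
  · refine integral_congr_ae (ae_of_all _ fun x => ?_)
    simp only [Complex.imCLM_apply, Complex.add_im, Complex.add_re, Complex.mul_im,
      Complex.mul_re, Complex.conj_re, Complex.conj_im, Complex.ofReal_re, Complex.ofReal_im,
      pd_re hcu, pd_im hcu, pd_re hcut, pd_im hcut, Fin.sum_univ_three]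
    ring
  · congr 1
    · congr 1
      · refine integral_congr_ae (ae_of_all _ fun x => ?_)
        simp only [hn, Complex.mul_re, Complex.conj_re, Complex.conj_im, pd_re hcu, pd_im hcu,
          Fin.sum_univ_three]
        ring
      · congr 1
        refine integral_congr_ae (ae_of_all _ fun x => ?_)
        simp only [hn4, Fin.sum_univ_three]
        ring
    · congr 1
      refine integral_congr_ae (ae_of_all _ fun x => ?_)
      simp only [hn4]
      ring
end
end
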